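/- arXiv:1103.5886 — 2 statements merged into one kernel-verified Lean document; each statement's English description precedes it below -/
import Mathlib

section
/- There is an absolute constant C such that for any h > 2 and all sufficiently large x, #{n : p_n ≤ x, p_{n+1} − p_n ≤ h} ≤ C·min(h/log x, 1)·π(x). -/
open Finset

/-- The `n`-th prime number (`nthPrime 0 = 2`). -/
noncomputable def nthPrime (n : ℕ) : ℕ := Nat.nth Nat.Prime n

/-- The prime counting function `π(x)` at a real argument: the number of primes `≤ x`. -/
noncomputable def primePi (x : ℝ) : ℕ := Nat.primeCounting ⌊x⌋₊

/-- `P_H(n) = ∏_{h ∈ H} (n + h)`. -/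
def tuplePoly (H : Finset ℕ) (n : ℕ) : ℕ := ∏ h ∈ H, (n + h)

/-- `ν_p(H)`: the number of distinct residue classes modulo `p` occupied by `H`. -/
def nuP (p : ℕ) (H : Finset ℕ) : ℕ := (H.image (· % p)).card

/-- `H` is admissible: for every prime `p`, the elements of `H` miss a residue class mod `p`. -/
def Admissible (H : Finset ℕ) : Prop := ∀ p : ℕ, p.Prime → nuP p H < p

/-- The singular series `𝔖(H) = ∏_p (1 - 1/p)^{-|H|} (1 - ν_p(H)/p)`. -/
noncomputable def singularSeries (H : Finset ℕ) : ℝ :=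
  ∏' p : Nat.Primes, ((1 - 1/((p : ℕ) : ℝ)) ^ (-(H.card : ℤ)) * (1 - (nuP p H : ℝ)/((p : ℕ) : ℝ)))

/-- `Λ_R(n; H, ℓ) = (1/(|H|+ℓ)!) ∑_{d ∣ P_H(n), d ≤ R} μ(d) (log (R/d))^{|H|+ℓ}`. -/
noncomputable def LambdaR (R : ℝ) (n : ℕ) (H : Finset ℕ) (ℓ : ℕ) : ℝ :=
  (1 / (H.card + ℓ).factorial : ℝ) *
    ∑ d ∈ (tuplePoly H n).divisors.filter (fun d : ℕ => (d : ℝ) ≤ R),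
      (ArithmeticFunction.moebius d : ℝ) * (Real.log (R / d)) ^ (H.card + ℓ)

/-- `𝒫(x)`: the product of all primes `≤ x`. -/
noncomputable def primorialReal (x : ℝ) : ℕ :=
  ∏ p ∈ (Finset.range (⌊x⌋₊ + 1)).filter Nat.Prime, p

/-- `θ(n) = log n` if `n` is prime, and `0` otherwise. -/
noncomputable def theta (n : ℕ) : ℝ := if n.Prime then Real.log n else 0

/-- `∑_{p ≤ N, p prime, p ≡ a (mod q)} log p`. -/
noncomputable def primeSumAP (N q a : ℕ) : ℝ :=
  ∑ p ∈ (Finset.range (N+1)).filter (fun p => p.Prime ∧ p % q = a % q), Real.log p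

/-- The primes have level of distribution `ϑ`: for every `A > 0` and `ε > 0`,
`∑_{q ≤ N^{ϑ-ε}} max_{(a,q)=1} |∑_{p ≤ N, p ≡ a (q)} log p - N/φ(q)| ≪_{A,ε} N (log N)^{-A}`
(the max over `a` is expressed via an arbitrary coprime choice function `a : ℕ → ℕ`). -/
def HasLevelOfDistribution (ϑ : ℝ) : Prop :=
  ∀ A : ℝ, 0 < A → ∀ ε : ℝ, 0 < ε → ∃ C : ℝ, 0 < C ∧
    ∀ N : ℕ, 2 ≤ N → ∀ a : ℕ → ℕ, (∀ q : ℕ, Nat.Coprime (a q) q) →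
      ∑ q ∈ Finset.Icc 1 ⌊(N : ℝ) ^ (ϑ - ε)⌋₊,
        |primeSumAP N q (a q) - (N : ℝ) / (Nat.totient q)| ≤ C * N / (Real.log N) ^ A

/-- The number of `j` with `N < p_j ≤ 2N` and `p_{j+1} - p_j ≤ h`. -/
noncomputable def gapCount (N : ℕ) (h : ℝ) : ℕ :=
  ((Finset.range (2*N+1)).filter (fun j =>
    N < nthPrime j ∧ nthPrime j ≤ 2*N ∧ ((nthPrime (j+1) : ℝ) - nthPrime j) ≤ h)).card

/-- The number of `j` with `N < p_j ≤ 2N` and `p_{j+2} - p_j ≤ h`. -/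
noncomputable def gapCount2 (N : ℕ) (h : ℝ) : ℕ :=
  ((Finset.range (2*N+1)).filter (fun j =>
    N < nthPrime j ∧ nthPrime j ≤ 2*N ∧ ((nthPrime (j+2) : ℝ) - nthPrime j) ≤ h)).card

/-! If `p_{n+1} - p_n = k`, then `p_n` and `p_n + k` are both prime. Selberg's sieve for the values
`n (n + k)` bounds the number of such pairs up to `x` by a constant times `(k / φ(k)) x / log² x`,
uniformly in even `k`, up to an error `O(√x)`; for odd `k` there is at most one pair. Since
`k / φ(k)` is bounded on average, summing over `1 ≤ k ≤ h` gives `O(h x / log² x)`, which by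
Chebyshev's lower bound for `π(x)` is `O((h / log x) π(x))`. For `h > log x` the trivial bound
`π(x)` is better.

The sieve needs the lower bound `G ≫ (φ(k) / k) log² y` for the Selberg sum of level `y²`. Expanding
each Euler factor of `g(l)` as a geometric series, with `f(n)` denoting the density of the multiples
of `n`, makes `g(l)` the sum of `f(n)` over all `n` of radical `l`, so that `G ≥ ∑_{n ≤ y²} f(n)`.
Now `n f(n)` is at least the number of factorisations `n = a b` with `b` coprime to `k`, whence
`G ≥ (∑_{a ≤ y} 1/a) (∑_{b ≤ y, (b, k) = 1} 1/b) ≥ (φ(k) / k) (∑_{a ≤ y} 1/a)²`. -/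

section SelbergSieve

open ArithmeticFunction BoundingSieve
open scoped ArithmeticFunction.Moebius ArithmeticFunction.omega

theorem sum_moebius_divisors_filter_dvd {l m : ℕ} (hm : Squarefree m) :
    ∑ d ∈ m.divisors with l ∣ d, μ d = if m = l then μ l else 0 := by
  by_cases hlm : l ∣ m
  · obtain ⟨q, rfl⟩ := hlm
    obtain ⟨hl, hq⟩ : l ≠ 0 ∧ q ≠ 0 := mul_ne_zero_iff.mp hm.ne_zero
    have multiples_eq : (l * q).divisors.filter (l ∣ ·) = q.divisors.image (l * ·) := by
      ext d
      simp only [mem_filter, Nat.mem_divisors, mem_image]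
      constructor
      · rintro ⟨⟨hd, -⟩, e, rfl⟩
        exact ⟨e, ⟨(Nat.mul_dvd_mul_iff_left (Nat.pos_of_ne_zero hl)).mp hd, hq⟩, rfl⟩
      · rintro ⟨e, ⟨he, -⟩, rfl⟩
        exact ⟨⟨mul_dvd_mul_left l he, hm.ne_zero⟩, dvd_mul_right l e⟩
    calc ∑ d ∈ (l * q).divisors with l ∣ d, μ d
        = ∑ e ∈ q.divisors, μ (l * e) := by
          rw [multiples_eq, sum_image fun a _ b _ ↦ mul_left_cancel₀ hl]
      _ = μ l * ∑ e ∈ q.divisors, μ e := by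
          rw [mul_sum]
          refine sum_congr rfl fun e he ↦ ?_
          have hle := hm.squarefree_of_dvd (mul_dvd_mul_left l (Nat.dvd_of_mem_divisors he))
          exact isMultiplicative_moebius.map_mul_of_coprime (Nat.coprime_of_squarefree_mul hle)
      _ = if l * q = l then μ l else 0 := by
          rw [← coe_zeta_mul_apply, coe_zeta_mul_moebius, one_apply, mul_ite, mul_one, mul_zero]
          simp only [mul_eq_left₀ hl]
  · rw [if_neg (by rintro rfl; exact hlm dvd_rfl), filter_false_of_mem, sum_empty]
    exact fun d hd hld ↦ hlm (hld.trans (Nat.dvd_of_mem_divisors hd))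

variable (s : BoundingSieve) (z : ℕ)

/-- The moduli carrying the Selberg weights: the divisors of the sifting product `P` that are at
most `z`. -/
def selbergSupport : Finset ℕ := s.prodPrimes.divisors.filter (· ≤ z)

/-- The sum `G(z) = ∑_{l ∣ P, l ≤ z} g(l)`, whose reciprocal is the density factor in Selberg's
bound. -/
noncomputable def selbergSum : ℝ := ∑ l ∈ selbergSupport s z, s.selbergTerms l

/-- Selberg's optimal weight `λ_d = μ(d) / (ν(d) G(z)) ∑_{d ∣ l} g(l)`, where `l` runs over the
divisors of `P` up to `z`. The normalisation is `λ_1 = 1`. -/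
noncomputable def selbergWeight (d : ℕ) : ℝ :=
  μ d / (s.nu d * selbergSum s z) * ∑ l ∈ selbergSupport s z with d ∣ l, s.selbergTerms l

variable {s z} {d : ℕ}

theorem mem_selbergSupport : d ∈ selbergSupport s z ↔ d ∣ s.prodPrimes ∧ d ≤ z := by
  simp [selbergSupport, prodPrimes_ne_zero]

theorem selbergSum_pos (hz : z ≠ 0) : 0 < selbergSum s z :=
  sum_pos (fun _ hl ↦ selbergTerms_pos (mem_selbergSupport.mp hl).1)
    ⟨1, mem_selbergSupport.mpr ⟨one_dvd _, Nat.one_le_iff_ne_zero.mpr hz⟩⟩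

theorem selbergWeight_one (hz : z ≠ 0) : selbergWeight s z 1 = 1 := by
  have := inv_mul_cancel₀ (selbergSum_pos (s := s) hz).ne'
  simpa [selbergWeight, s.nu_mult.map_one, selbergSum] using this

theorem selbergWeight_eq_zero_of_lt (h : z < d) : selbergWeight s z d = 0 := by
  rw [selbergWeight, filter_false_of_mem, sum_empty, mul_zero]
  intro l hl hdl
  obtain ⟨hlP, hlz⟩ := mem_selbergSupport.mp hl
  exact (h.trans_le (Nat.le_of_dvd (squarefree_of_dvd_prodPrimes hlP).ne_zero.pos hdl)).not_ge hlz

theorem selbergTerms_mul_comm_of_squarefree {k e m : ℕ} (h : Squarefree (k * e * m)) :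
    s.selbergTerms k * s.selbergTerms (k * e * m) =
      s.selbergTerms (k * e) * s.selbergTerms (k * m) := by
  obtain ⟨hke_m, hke, -⟩ := Nat.squarefree_mul_iff.mp h
  rw [selbergTerms_isMultiplicative.map_mul_of_coprime hke_m,
    selbergTerms_isMultiplicative.map_mul_of_coprime (Nat.coprime_of_squarefree_mul hke),
    selbergTerms_isMultiplicative.map_mul_of_coprime hke_m.coprime_mul_right]
  ring

theorem selbergTerms_mul_sum_filter_dvd_le {k : ℕ} (hd : d ∣ s.prodPrimes) (hk : k ∣ d) :
    s.selbergTerms k * ∑ l ∈ selbergSupport s z with d ∣ l, s.selbergTerms l ≤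
      s.selbergTerms d * ∑ l ∈ selbergSupport s z with l.gcd d = k, s.selbergTerms l := by
  obtain ⟨e, rfl⟩ := hk
  have he : 0 < e := (right_ne_zero_of_mul (squarefree_of_dvd_prodPrimes hd).ne_zero).pos
  have div_eq (m : ℕ) : k * e * m / e = k * m := by rw [mul_right_comm, Nat.mul_div_cancel _ he]
  have div_injOn : Set.InjOn (· / e) (filter (k * e ∣ ·) (selbergSupport s z)) := by
    intro l₁ h₁ l₂ h₂ h
    exact (Nat.div_left_inj ((dvd_mul_left e k).trans (mem_filter.mp h₁).2)
      ((dvd_mul_left e k).trans (mem_filter.mp h₂).2)).mp h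
  -- Dividing by `d / k` turns the multiples of `d` into elements whose gcd with `d` is `k`.
  have image_div_subset : (filter (k * e ∣ ·) (selbergSupport s z)).image (· / e) ⊆
      filter (fun l ↦ l.gcd (k * e) = k) (selbergSupport s z) := by
    simp only [image_subset_iff, mem_filter, mem_selbergSupport, and_imp]
    rintro _ hlP hlz ⟨m, rfl⟩
    have hsq := squarefree_of_dvd_prodPrimes hlP
    have hme := (Nat.coprime_of_squarefree_mul hsq).coprime_mul_left
    rw [div_eq]
    refine ⟨⟨?_, ?_⟩, ?_⟩
    · exact (mul_dvd_mul_right (dvd_mul_right k e) m).trans hlP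
    · exact (Nat.mul_le_mul_right m (Nat.le_mul_of_pos_right k he)).trans hlz
    · rw [Nat.gcd_mul_left, hme.symm.gcd_eq_one, mul_one]
  calc s.selbergTerms k * ∑ l ∈ selbergSupport s z with k * e ∣ l, s.selbergTerms l
      = s.selbergTerms (k * e) *
          ∑ l ∈ (filter (k * e ∣ ·) (selbergSupport s z)).image (· / e), s.selbergTerms l := by
        rw [sum_image div_injOn, mul_sum, mul_sum]
        refine sum_congr rfl fun l hl ↦ ?_
        obtain ⟨hl, m, rfl⟩ := mem_filter.mp hl
        rw [div_eq, selbergTerms_mul_comm_of_squarefree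
          (squarefree_of_dvd_prodPrimes (mem_selbergSupport.mp hl).1)]
    _ ≤ _ := by
        refine mul_le_mul_of_nonneg_left
          (sum_le_sum_of_subset_of_nonneg image_div_subset fun l hl _ ↦ ?_) (selbergTerms_pos hd).le
        exact (selbergTerms_pos (mem_selbergSupport.mp (mem_filter.mp hl).1).1).le

theorem sum_filter_dvd_selbergTerms_le (hd : d ∣ s.prodPrimes) :
    ∑ l ∈ selbergSupport s z with d ∣ l, s.selbergTerms l ≤ s.nu d * selbergSum s z := by
  set M := ∑ l ∈ selbergSupport s z with d ∣ l, s.selbergTerms l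
  have sum_mul_le : s.selbergTerms d * (s.nu d)⁻¹ * M ≤ s.selbergTerms d * selbergSum s z :=
    calc s.selbergTerms d * (s.nu d)⁻¹ * M
        = ∑ k ∈ d.divisors, s.selbergTerms k * M := by
          rw [← sum_divisors_selbergTerms_eq_selbergTerms_mul_nu_inv hd, ← sum_filter,
            Nat.divisors_filter_dvd_of_dvd prodPrimes_ne_zero hd, sum_mul]
      _ ≤ ∑ k ∈ d.divisors,
            s.selbergTerms d * ∑ l ∈ selbergSupport s z with l.gcd d = k, s.selbergTerms l :=
          sum_le_sum fun k hk ↦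
            selbergTerms_mul_sum_filter_dvd_le hd (Nat.dvd_of_mem_divisors hk)
      _ = s.selbergTerms d * selbergSum s z := by
          rw [← mul_sum, sum_fiberwise_of_maps_to fun l _ ↦ Nat.mem_divisors.mpr
            ⟨Nat.gcd_dvd_right l d, (squarefree_of_dvd_prodPrimes hd).ne_zero⟩, selbergSum]
  rw [mul_assoc] at sum_mul_le
  exact (inv_mul_le_iff₀ (nu_pos_of_dvd_prodPrimes hd)).mp
    (le_of_mul_le_mul_left sum_mul_le (selbergTerms_pos hd))

theorem abs_selbergWeight_le_one (hd : d ∣ s.prodPrimes) : |selbergWeight s z d| ≤ 1 := by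
  have multiples_nonneg : 0 ≤ ∑ l ∈ selbergSupport s z with d ∣ l, s.selbergTerms l :=
    sum_nonneg fun l hl ↦ (selbergTerms_pos (mem_selbergSupport.mp (mem_of_mem_filter l hl)).1).le
  have nu_mul_nonneg : 0 ≤ s.nu d * selbergSum s z :=
    multiples_nonneg.trans (sum_filter_dvd_selbergTerms_le hd)
  have abs_moebius : |(μ d : ℝ)| = 1 := by
    exact_mod_cast abs_moebius_eq_one_of_squarefree (squarefree_of_dvd_prodPrimes hd)
  rw [selbergWeight, abs_mul, abs_div, abs_moebius, abs_of_nonneg nu_mul_nonneg,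
    abs_of_nonneg multiples_nonneg, one_div_mul_eq_div]
  exact div_le_one_of_le₀ (sum_filter_dvd_selbergTerms_le hd) nu_mul_nonneg

theorem sum_nu_mul_selbergWeight {l : ℕ} :
    (∑ d ∈ s.prodPrimes.divisors, if l ∣ d then s.nu d * selbergWeight s z d else 0) =
      if l ∈ selbergSupport s z then μ l * s.selbergTerms l / selbergSum s z else 0 := by
  have nu_mul_weight : ∀ d ∈ s.prodPrimes.divisors, s.nu d * selbergWeight s z d =
      ∑ m ∈ selbergSupport s z, if d ∣ m then μ d * (s.selbergTerms m / selbergSum s z) else 0 := by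
    intro d hd
    have := nu_ne_zero (s := s) (Nat.dvd_of_mem_divisors hd)
    rw [selbergWeight, ← sum_filter, ← mul_sum, ← sum_div]
    field_simp
  have sum_moebius : ∀ m ∈ selbergSupport s z,
      ∑ d ∈ s.prodPrimes.divisors with l ∣ d ∧ d ∣ m, (μ d : ℝ) = if m = l then μ l else 0 := by
    intro m hm
    have hmP := (mem_selbergSupport.mp hm).1
    simp only [and_comm (a := l ∣ _), ← filter_filter]
    rw [Nat.divisors_filter_dvd_of_dvd prodPrimes_ne_zero hmP]
    exact_mod_cast sum_moebius_divisors_filter_dvd (squarefree_of_dvd_prodPrimes hmP)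
  calc _ = ∑ d ∈ s.prodPrimes.divisors, ∑ m ∈ selbergSupport s z,
          if l ∣ d ∧ d ∣ m then μ d * (s.selbergTerms m / selbergSum s z) else 0 := by
        refine sum_congr rfl fun d hd ↦ ?_
        simp only [nu_mul_weight d hd, ite_and, ite_sum_zero]
    _ = ∑ m ∈ selbergSupport s z,
          (if m = l then μ l else 0) * (s.selbergTerms m / selbergSum s z) := by
        rw [sum_comm]
        refine sum_congr rfl fun m hm ↦ ?_
        rw [← sum_filter, ← sum_mul, sum_moebius m hm]
    _ = _ := by simp [ite_mul, mul_div_assoc]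

theorem mainSum_lambdaSquared_selbergWeight :
    s.mainSum (lambdaSquared (selbergWeight s z)) = (selbergSum s z)⁻¹ := by
  have diagonal_term : ∀ l ∈ selbergSupport s z,
      (s.selbergTerms l)⁻¹ * (μ l * s.selbergTerms l / selbergSum s z) ^ 2 =
        s.selbergTerms l / selbergSum s z ^ 2 := by
    intro l hl
    have hlP := (mem_selbergSupport.mp hl).1
    have moebius_sq : (μ l : ℝ) ^ 2 = 1 := by
      exact_mod_cast moebius_sq_eq_one_of_squarefree (squarefree_of_dvd_prodPrimes hlP)
    have := (selbergTerms_pos hlP).ne'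
    rw [div_pow, mul_pow, moebius_sq]
    field_simp
  calc s.mainSum (lambdaSquared (selbergWeight s z))
      = ∑ l ∈ selbergSupport s z, s.selbergTerms l / selbergSum s z ^ 2 := by
        rw [mainSum_lambdaSquared_eq_sum_mul_sum_sq]
        simp only [sum_nu_mul_selbergWeight, ite_pow, mul_ite, zero_pow two_ne_zero, mul_zero]
        rw [← sum_filter, filter_mem_eq_inter, selbergSupport,
          inter_eq_right.mpr (filter_subset _ _), ← selbergSupport]
        exact sum_congr rfl diagonal_term
    _ = (selbergSum s z)⁻¹ := by
        rw [← sum_div, ← selbergSum, sq, div_self_mul_self']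

theorem abs_lambdaSquared_selbergWeight_le (hd : d ∣ s.prodPrimes) :
    |lambdaSquared (selbergWeight s z) d| ≤ 3 ^ ω d := by
  have abs_weight_le : ∀ d₁ ∈ d.divisors, |selbergWeight s z d₁| ≤ 1 := fun d₁ hd₁ ↦
    abs_selbergWeight_le_one ((Nat.dvd_of_mem_divisors hd₁).trans hd)
  calc |lambdaSquared (selbergWeight s z) d|
      = |∑ q ∈ d.divisors ×ˢ d.divisors with q.1.lcm q.2 = d,
          selbergWeight s z q.1 * selbergWeight s z q.2| := by
        simp only [lambdaSquared, sum_filter, sum_product, eq_comm]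
    _ ≤ ∑ q ∈ d.divisors ×ˢ d.divisors with q.1.lcm q.2 = d, 1 := by
        refine (abs_sum_le_sum_abs _ _).trans (sum_le_sum fun q hq ↦ ?_)
        obtain ⟨h₁, h₂⟩ := mem_product.mp (mem_of_mem_filter q hq)
        rw [abs_mul]
        exact mul_le_one₀ (abs_weight_le _ h₁) (abs_nonneg _) (abs_weight_le _ h₂)
    _ = 3 ^ ω d := by
        rw [sum_const, Nat.card_pair_lcm_eq (squarefree_of_dvd_prodPrimes hd)]
        simp

theorem lambdaSquared_selbergWeight_eq_zero_of_lt (h : z ^ 2 < d) :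
    lambdaSquared (selbergWeight s z) d = 0 := by
  refine sum_eq_zero fun d₁ hd₁ ↦ sum_eq_zero fun d₂ hd₂ ↦ ?_
  split_ifs with hlcm
  · have large : z < d₁ ∨ z < d₂ := by
      by_contra! small
      have : d ≤ z * z := hlcm.trans_le
        ((Nat.lcm_le_mul (Nat.pos_of_mem_divisors hd₁) (Nat.pos_of_mem_divisors hd₂)).trans
          (Nat.mul_le_mul small.1 small.2))
      exact (this.trans_eq (sq z).symm).not_gt h
    rcases large with h₁ | h₂
    · rw [selbergWeight_eq_zero_of_lt h₁, zero_mul]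
    · rw [selbergWeight_eq_zero_of_lt h₂, mul_zero]
  · rfl

theorem siftedSum_le_div_selbergSum_add (hz : z ≠ 0) :
    s.siftedSum ≤ s.totalMass / selbergSum s z +
      ∑ d ∈ s.prodPrimes.divisors with d ≤ z ^ 2, 3 ^ ω d * |s.rem d| := by
  have upperMoebius := upperMoebius_lambdaSquared _ (selbergWeight_one (s := s) hz)
  refine (siftedSum_le_mainSum_errSum_of_upperMoebius _ upperMoebius).trans ?_
  rw [mainSum_lambdaSquared_selbergWeight, ← div_eq_mul_inv, errSum, sum_filter]
  gcongr with d hd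
  split_ifs with hdz
  · gcongr
    exact abs_lambdaSquared_selbergWeight_le (Nat.dvd_of_mem_divisors hd)
  · rw [lambdaSquared_selbergWeight_eq_zero_of_lt (not_le.mp hdz), abs_zero, zero_mul]

end SelbergSieve

section EulerProducts

open UniqueFactorizationMonoid (radical)

theorem sum_le_mul_prod_of_radical_eq {f : ℕ →* ℝ} (hf : ∀ n, 0 ≤ f n)
    (hf_lt : ∀ p, p.Prime → f p < 1) {l : ℕ} {T : Finset ℕ}
    (hT : ∀ n ∈ T, n ≠ 0 ∧ radical n = l) :
    ∑ n ∈ T, f n ≤ f l * ∏ p ∈ l.primeFactors, (1 - f p)⁻¹ := by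
  have dvd_of_mem : ∀ n ∈ T, l ∣ n := fun n hn ↦
    (hT n hn).2 ▸ UniqueFactorizationMonoid.radical_dvd_self
  have div_injOn : Set.InjOn (· / l) (T : Set ℕ) := fun m hm n hn h ↦
    (Nat.div_left_inj (dvd_of_mem m hm) (dvd_of_mem n hn)).mp h
  have div_mem_factoredNumbers : ∀ n ∈ T, n / l ∈ Nat.factoredNumbers l.primeFactors := by
    intro n hn
    obtain ⟨hn0, rfl⟩ := hT n hn
    rw [Nat.primeFactors_radical]
    exact Nat.mem_factoredNumbers_of_primeFactors_subset
      (Nat.div_ne_zero_iff_of_dvd (dvd_of_mem n hn) |>.mpr ⟨hn0, (Nat.radical_pos n).ne'⟩)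
      (Nat.primeFactors_mono (Nat.div_dvd_of_dvd (dvd_of_mem n hn)) hn0)
  have hasSum := (EulerProduct.summable_and_hasSum_factoredNumbers_prod_filter_prime_geometric
    (f := f) (fun {p} hp ↦ by rw [Real.norm_of_nonneg (hf p)]; exact hf_lt p hp) l.primeFactors).2
  rw [filter_true_of_mem fun p hp ↦ Nat.prime_of_mem_primeFactors hp] at hasSum
  replace hasSum := (hasSum_subtype_iff_indicator (f := f)).mp hasSum
  calc ∑ n ∈ T, f n
      = f l * ∑ m ∈ T.image (· / l), (Nat.factoredNumbers l.primeFactors).indicator f m := by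
        rw [sum_image div_injOn, mul_sum]
        refine sum_congr rfl fun n hn ↦ ?_
        rw [Set.indicator_of_mem (div_mem_factoredNumbers n hn), ← map_mul,
          Nat.mul_div_cancel' (dvd_of_mem n hn)]
    _ ≤ f l * ∏ p ∈ l.primeFactors, (1 - f p)⁻¹ := by
        gcongr
        · exact hf l
        · exact sum_le_hasSum _ (fun m _ ↦ Set.indicator_nonneg (fun n _ ↦ hf n) m) hasSum

theorem sum_Icc_le_sum_squarefree_mul_prod {f : ℕ →* ℝ} (hf : ∀ n, 0 ≤ f n)
    (hf_lt : ∀ p, p.Prime → f p < 1) (z : ℕ) :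
    ∑ n ∈ Icc 1 z, f n ≤
      ∑ l ∈ Icc 1 z with Squarefree l, f l * ∏ p ∈ l.primeFactors, (1 - f p)⁻¹ := by
  have radical_mem : ∀ n ∈ Icc 1 z, radical n ∈ filter Squarefree (Icc 1 z) := by
    intro n hn
    obtain ⟨hn1, hnz⟩ := mem_Icc.mp hn
    exact mem_filter.mpr ⟨mem_Icc.mpr ⟨Nat.radical_pos n, (Nat.radical_le_self_iff.mpr
      (Nat.ne_of_gt hn1)).trans hnz⟩, UniqueFactorizationMonoid.squarefree_radical⟩
  rw [← sum_fiberwise_of_maps_to radical_mem]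
  refine sum_le_sum fun l _ ↦ sum_le_mul_prod_of_radical_eq hf hf_lt fun n hn ↦ ?_
  obtain ⟨hn, hnl⟩ := mem_filter.mp hn
  exact ⟨Nat.ne_of_gt (mem_Icc.mp hn).1, hnl⟩

end EulerProducts

section Totient

theorem one_sub_inv_mul_sum_inv_le {P : ℕ → Prop} [DecidablePred P] {q : ℕ} (hq : q ≠ 0)
    (hP : ∀ c, P (q * c) → P c) (y : ℕ) :
    (1 - (q : ℝ)⁻¹) * ∑ b ∈ Icc 1 y with P b, (b : ℝ)⁻¹ ≤
      ∑ b ∈ Icc 1 y with P b ∧ ¬ q ∣ b, (b : ℝ)⁻¹ := by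
  have multiples_subset : {b ∈ Icc 1 y | P b ∧ q ∣ b} ⊆ {b ∈ Icc 1 y | P b}.image (q * ·) := by
    simp only [subset_iff, mem_filter, mem_Icc, mem_image, and_imp]
    rintro _ hb hby hPb ⟨c, rfl⟩
    exact ⟨c, ⟨⟨Nat.pos_of_mul_pos_left hb, (Nat.le_mul_of_pos_left c hq.pos).trans hby⟩,
      hP c hPb⟩, rfl⟩
  have sum_multiples_le : ∑ b ∈ Icc 1 y with P b ∧ q ∣ b, (b : ℝ)⁻¹ ≤
      (q : ℝ)⁻¹ * ∑ b ∈ Icc 1 y with P b, (b : ℝ)⁻¹ := by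
    refine (sum_le_sum_of_subset_of_nonneg multiples_subset fun _ _ _ ↦ by positivity).trans_eq ?_
    rw [sum_image fun a _ b _ ↦ mul_left_cancel₀ hq, mul_sum]
    exact sum_congr rfl fun c _ ↦ by push_cast; rw [mul_inv]
  have split := sum_filter_add_sum_filter_not {b ∈ Icc 1 y | P b} (q ∣ ·) fun b ↦ (b : ℝ)⁻¹
  rw [filter_filter, filter_filter] at split
  linarith

theorem prod_one_sub_inv_mul_harmonic_le {S : Finset ℕ} (hS : ∀ p ∈ S, p.Prime) (y : ℕ) :
    (∏ p ∈ S, (1 - (p : ℝ)⁻¹)) * harmonic y ≤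
      ∑ b ∈ Icc 1 y with ∀ p ∈ S, ¬ p ∣ b, (b : ℝ)⁻¹ := by
  induction S using Finset.induction_on with
  | empty => simp [harmonic_eq_sum_Icc]
  | insert q S hqS ih =>
    obtain ⟨hq, hS⟩ := (forall_mem_insert _ _ _).mp hS
    have one_sub_nonneg : 0 ≤ 1 - (q : ℝ)⁻¹ := sub_nonneg.mpr (Nat.cast_inv_le_one q)
    calc (∏ p ∈ insert q S, (1 - (p : ℝ)⁻¹)) * harmonic y
        = (1 - (q : ℝ)⁻¹) * ((∏ p ∈ S, (1 - (p : ℝ)⁻¹)) * harmonic y) := by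
          rw [prod_insert hqS, mul_assoc]
      _ ≤ (1 - (q : ℝ)⁻¹) * ∑ b ∈ Icc 1 y with ∀ p ∈ S, ¬ p ∣ b, (b : ℝ)⁻¹ := by
          gcongr
          exact ih hS
      _ ≤ ∑ b ∈ Icc 1 y with (∀ p ∈ S, ¬ p ∣ b) ∧ ¬ q ∣ b, (b : ℝ)⁻¹ :=
          one_sub_inv_mul_sum_inv_le hq.ne_zero
            (fun c hc p hp hpc ↦ hc p hp (hpc.mul_left q)) y
      _ = ∑ b ∈ Icc 1 y with ∀ p ∈ insert q S, ¬ p ∣ b, (b : ℝ)⁻¹ := by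
          simp only [forall_mem_insert, and_comm]

theorem totient_div_self {k : ℕ} (hk : k ≠ 0) :
    (k.totient : ℝ) / k = ∏ p ∈ k.primeFactors, (1 - (p : ℝ)⁻¹) := by
  rw [div_eq_iff (Nat.cast_ne_zero.mpr hk), mul_comm]
  have totient_eq := congrArg (Rat.cast : ℚ → ℝ) (Nat.totient_eq_mul_prod_factors k)
  push_cast at totient_eq
  exact totient_eq

theorem totient_div_self_mul_harmonic_le {k : ℕ} (hk : k ≠ 0) (y : ℕ) :
    (k.totient : ℝ) / k * harmonic y ≤ ∑ b ∈ Icc 1 y with b.Coprime k, (b : ℝ)⁻¹ := by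
  have coprime_iff (b : ℕ) : b.Coprime k ↔ ∀ p ∈ k.primeFactors, ¬ p ∣ b := by
    refine ⟨fun hbk p hp hpb ↦ ?_, fun h ↦ (Nat.coprime_of_dvd fun p hp hpk ↦ ?_).symm⟩
    · obtain ⟨hp, hpk, -⟩ := Nat.mem_primeFactors.mp hp
      exact Nat.not_coprime_of_dvd_of_dvd hp.one_lt hpb hpk hbk
    · exact h p (Nat.mem_primeFactors.mpr ⟨hp, hpk, hk⟩)
  simp only [coprime_iff, totient_div_self hk]
  exact prod_one_sub_inv_mul_harmonic_le (fun p hp ↦ Nat.prime_of_mem_primeFactors hp) y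

theorem prod_Icc_one_sub_inv_sq (M : ℕ) :
    ∏ n ∈ Icc 2 (M + 1), (1 - ((n : ℝ) ^ 2)⁻¹) = (M + 2) / (2 * (M + 1)) := by
  induction M with
  | zero => simp
  | succ M ih =>
    rw [prod_Icc_succ_top (by lia), ih]
    push_cast
    field_simp
    ring

theorem half_le_prod_one_sub_inv_sq {S : Finset ℕ} (hS : ∀ n ∈ S, 2 ≤ n) :
    1 / 2 ≤ ∏ n ∈ S, (1 - ((n : ℝ) ^ 2)⁻¹) := by
  set M := S.sup id
  have subset_Icc : S ⊆ Icc 2 (M + 1) := fun n hn ↦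
    mem_Icc.mpr ⟨hS n hn, (le_sup (f := id) hn).trans M.le_succ⟩
  have inv_sq_le_one (n : ℕ) : ((n : ℝ) ^ 2)⁻¹ ≤ 1 := by exact_mod_cast Nat.cast_inv_le_one (n ^ 2)
  calc (1 / 2 : ℝ) ≤ (M + 2) / (2 * (M + 1)) := by
        rw [div_le_div_iff₀ two_pos (by positivity)]
        linarith
    _ = ∏ n ∈ Icc 2 (M + 1), (1 - ((n : ℝ) ^ 2)⁻¹) := (prod_Icc_one_sub_inv_sq M).symm
    _ ≤ ∏ n ∈ S, (1 - ((n : ℝ) ^ 2)⁻¹) :=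
        prod_le_prod_of_subset_of_le_one subset_Icc
          (fun n _ ↦ sub_nonneg.mpr (inv_sq_le_one n)) fun n _ _ ↦ sub_le_self 1 (by positivity)

theorem prod_one_add_inv_le_sum_inv {k : ℕ} (hk : k ≠ 0) :
    ∏ p ∈ k.primeFactors, (1 + (p : ℝ)⁻¹) ≤ ∑ d ∈ k.divisors, (d : ℝ)⁻¹ := by
  have prod_injOn : Set.InjOn (fun T : Finset ℕ ↦ ∏ p ∈ T, p) k.primeFactors.powerset := by
    intro T hT T' hT' h
    have primes {T} (hT : T ∈ k.primeFactors.powerset) : ∀ p ∈ T, p.Prime := fun p hp ↦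
      Nat.prime_of_mem_primeFactors (mem_powerset.mp hT hp)
    simpa only [Nat.primeFactors_prod (primes hT), Nat.primeFactors_prod (primes hT')]
      using congrArg Nat.primeFactors h
  have image_subset : k.primeFactors.powerset.image (fun T ↦ ∏ p ∈ T, p) ⊆ k.divisors := by
    simp only [image_subset_iff, mem_powerset, Nat.mem_divisors]
    exact fun T hT ↦ ⟨(prod_dvd_prod_of_subset _ _ _ hT).trans (Nat.prod_primeFactors_dvd k), hk⟩
  calc ∏ p ∈ k.primeFactors, (1 + (p : ℝ)⁻¹)
      = ∑ d ∈ k.primeFactors.powerset.image (fun T ↦ ∏ p ∈ T, p), (d : ℝ)⁻¹ := by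
        rw [prod_one_add, sum_image prod_injOn]
        push_cast
        simp only [prod_inv_distrib]
    _ ≤ ∑ d ∈ k.divisors, (d : ℝ)⁻¹ :=
        sum_le_sum_of_subset_of_nonneg image_subset fun _ _ _ ↦ by positivity

theorem self_div_totient_le {k : ℕ} (hk : k ≠ 0) :
    (k : ℝ) / k.totient ≤ 2 * ∑ d ∈ k.divisors, (d : ℝ)⁻¹ := by
  have totient_pos : (0 : ℝ) < k.totient := by exact_mod_cast Nat.totient_pos.mpr hk.pos
  have half_le : 1 / 2 ≤ (k.totient : ℝ) / k * ∑ d ∈ k.divisors, (d : ℝ)⁻¹ :=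
    calc (1 / 2 : ℝ)
        ≤ ∏ p ∈ k.primeFactors, (1 - ((p : ℝ) ^ 2)⁻¹) :=
          half_le_prod_one_sub_inv_sq fun p hp ↦ (Nat.prime_of_mem_primeFactors hp).two_le
      _ = k.totient / k * ∏ p ∈ k.primeFactors, (1 + (p : ℝ)⁻¹) := by
          rw [totient_div_self hk, ← prod_mul_distrib]
          exact prod_congr rfl fun p _ ↦ by rw [← inv_pow]; ring
      _ ≤ k.totient / k * ∑ d ∈ k.divisors, (d : ℝ)⁻¹ := by
          gcongr
          exact prod_one_add_inv_le_sum_inv hk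
  have hk_pos : (0 : ℝ) < k := by exact_mod_cast hk.pos
  rw [div_mul_eq_mul_div, le_div_iff₀ hk_pos] at half_le
  rw [div_le_iff₀ totient_pos]
  linarith

theorem sum_self_div_totient_le (H : ℕ) : ∑ k ∈ Ioc 0 H, (k : ℝ) / k.totient ≤ 4 * H := by
  let inv : ArithmeticFunction ℝ := ⟨fun d ↦ (d : ℝ)⁻¹, by simp⟩
  have sum_inv_sq_le : ∑ d ∈ Ioc 0 H, ((d : ℝ) ^ 2)⁻¹ ≤ 2 := by
    rw [← Ioo_add_one_right_eq_Ioc]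
    simpa using sum_Ioo_inv_sq_le (α := ℝ) 0 (H + 1)
  have sum_divisors_eq : ∑ k ∈ Ioc 0 H, ∑ d ∈ k.divisors, (d : ℝ)⁻¹ =
      ∑ d ∈ Ioc 0 H, (d : ℝ)⁻¹ * (H / d : ℕ) := by
    have sum_mul_zeta_eq := ArithmeticFunction.sum_Ioc_mul_zeta_eq_sum inv H
    simp only [ArithmeticFunction.coe_mul_zeta_apply] at sum_mul_zeta_eq
    exact sum_mul_zeta_eq
  calc ∑ k ∈ Ioc 0 H, (k : ℝ) / k.totient
      ≤ ∑ k ∈ Ioc 0 H, 2 * ∑ d ∈ k.divisors, (d : ℝ)⁻¹ :=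
        sum_le_sum fun k hk ↦ self_div_totient_le (mem_Ioc.mp hk).1.ne'
    _ = 2 * ∑ d ∈ Ioc 0 H, (d : ℝ)⁻¹ * (H / d : ℕ) := by
        rw [← mul_sum, sum_divisors_eq]
    _ ≤ 2 * ∑ d ∈ Ioc 0 H, (d : ℝ)⁻¹ * (H / d : ℝ) := by
        gcongr
        exact Nat.cast_div_le
    _ = 2 * H * ∑ d ∈ Ioc 0 H, ((d : ℝ) ^ 2)⁻¹ := by
        rw [mul_sum, mul_sum]
        exact sum_congr rfl fun d _ ↦ by ring
    _ ≤ 2 * H * 2 := by gcongr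
    _ = 4 * H := by ring

end Totient

section PeriodicCounting

variable {p : ℕ → Prop} [DecidablePred p] {d : ℕ}

theorem count_mul_add_of_periodic (hp : Function.Periodic p d) (q r : ℕ) :
    Nat.count p (q * d + r) = q * Nat.count p d + Nat.count p r := by
  have shift_eq : (fun n ↦ p (d + n)) = p := funext fun n ↦ by rw [add_comm, hp n]
  induction q with
  | zero => simp
  | succ q ih =>
    rw [show (q + 1) * d + r = d + (q * d + r) by ring, Nat.count_add]
    simp only [shift_eq, ih]
    ring

theorem abs_count_sub_le_of_periodic (hd : d ≠ 0) (hp : Function.Periodic p d) (N : ℕ) :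
    |(Nat.count p N : ℝ) - Nat.count p d / d * N| ≤ Nat.count p d := by
  have hd_pos : (0 : ℝ) < d := by exact_mod_cast hd.pos
  have mod_le : N % d ≤ d := (Nat.mod_lt N hd.pos).le
  have count_eq : (Nat.count p N : ℝ) = (N / d : ℕ) * Nat.count p d + Nat.count p (N % d) := by
    exact_mod_cast Nat.div_add_mod' N d ▸ count_mul_add_of_periodic hp (N / d) (N % d)
  have div_add_mod : (N : ℝ) = (N / d : ℕ) * d + (N % d : ℕ) := by
    exact_mod_cast (Nat.div_add_mod' N d).symm
  have difference_eq : (Nat.count p N : ℝ) - Nat.count p d / d * N =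
      Nat.count p (N % d) - Nat.count p d * ((N % d : ℕ) / d) := by
    rw [count_eq, div_add_mod]
    field_simp
    ring
  rw [difference_eq]
  refine abs_sub_le_of_nonneg_of_le (Nat.cast_nonneg _) ?_ (by positivity) ?_
  · exact_mod_cast Nat.count_monotone p mod_le
  · refine mul_le_of_le_one_right (Nat.cast_nonneg _) (div_le_one_of_le₀ ?_ hd_pos.le)
    exact_mod_cast mod_le

end PeriodicCounting

section PairDensity

/-- The number of roots of `X (X + k)` modulo a prime `p` (namely `1` if `p ∣ k`, and `2`
otherwise), extended completely multiplicatively. For squarefree `n` this is the number of roots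
modulo `n`. -/
def pairRootCount (k n : ℕ) : ℕ := (n.primeFactorsList.map fun p ↦ if p ∣ k then 1 else 2).prod

theorem pairRootCount_one (k : ℕ) : pairRootCount k 1 = 1 := by simp [pairRootCount]

theorem pairRootCount_mul (k : ℕ) {m n : ℕ} (hm : m ≠ 0) (hn : n ≠ 0) :
    pairRootCount k (m * n) = pairRootCount k m * pairRootCount k n := by
  simp only [pairRootCount, ((Nat.perm_primeFactorsList_mul hm hn).map _).prod_eq, List.map_append,
    List.prod_append]

theorem pairRootCount_prime (k : ℕ) {p : ℕ} (hp : p.Prime) :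
    pairRootCount k p = if p ∣ k then 1 else 2 := by
  simp [pairRootCount, Nat.primeFactorsList_prime hp]

theorem pairRootCount_lt_of_prime {k p : ℕ} (hk : Even k) (hp : p.Prime) :
    pairRootCount k p < p := by
  rw [pairRootCount_prime k hp]
  split_ifs with hpk
  · exact hp.one_lt
  · exact hp.two_le.lt_of_ne fun h ↦ hpk (h ▸ hk.two_dvd)

theorem natCard_roots_zmod_prime (k : ℕ) {p : ℕ} (hp : p.Prime) :
    Nat.card {a : ZMod p // a * (a + k) = 0} = pairRootCount k p := by
  have := Fact.mk hp
  have roots_eq : {a : ZMod p | a * (a + k) = 0} = {0, -(k : ZMod p)} := by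
    ext a
    simp [add_eq_zero_iff_eq_neg]
  change Nat.card {a : ZMod p | a * (a + k) = 0} = _
  rw [roots_eq, Nat.card_coe_set_eq, pairRootCount_prime k hp]
  split_ifs with hpk
  · simp [(ZMod.natCast_eq_zero_iff k p).mpr hpk]
  · refine Set.ncard_pair fun h ↦ hpk ((ZMod.natCast_eq_zero_iff k p).mp ?_)
    exact neg_eq_zero.mp h.symm

theorem natCard_roots_zmod_mul (k : ℕ) {m n : ℕ} (hmn : m.Coprime n) :
    Nat.card {a : ZMod (m * n) // a * (a + k) = 0} =
      Nat.card {a : ZMod m // a * (a + k) = 0} * Nat.card {a : ZMod n // a * (a + k) = 0} := by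
  let e := ZMod.chineseRemainder hmn
  have root_iff (a : ZMod (m * n)) : a * (a + k) = 0 ↔
      (e a).1 * ((e a).1 + k) = 0 ∧ (e a).2 * ((e a).2 + k) = 0 := by
    rw [← e.map_eq_zero_iff, map_mul, map_add, map_natCast, Prod.ext_iff]
    rfl
  rw [← Nat.card_prod]
  exact Nat.card_congr ((e.toEquiv.subtypeEquiv root_iff).trans Equiv.subtypeProdEquivProd)

theorem natCard_roots_zmod (k : ℕ) {d : ℕ} (hd : Squarefree d) :
    Nat.card {a : ZMod d // a * (a + k) = 0} = pairRootCount k d := by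
  induction d using induction_on_primes with
  | zero => simp at hd
  | one =>
    rw [pairRootCount_one, Nat.card_eq_one_iff_unique]
    exact ⟨⟨fun a b ↦ Subtype.ext (Subsingleton.elim _ _)⟩, ⟨0, Subsingleton.elim _ _⟩⟩
  | prime_mul p m hp ih =>
    have hm : Squarefree m := hd.squarefree_of_dvd (dvd_mul_left m p)
    rw [natCard_roots_zmod_mul k (Nat.coprime_of_squarefree_mul hd), ih hm,
      natCard_roots_zmod_prime k hp, pairRootCount_mul k hp.ne_zero hm.ne_zero]

theorem count_dvd_mul_add (k : ℕ) {d : ℕ} (hd : Squarefree d) :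
    Nat.count (fun n ↦ d ∣ n * (n + k)) d = pairRootCount k d := by
  have : NeZero d := ⟨hd.ne_zero⟩
  have dvd_iff (n : ℕ) : d ∣ n * (n + k) ↔ (n : ZMod d) * (n + k) = 0 := by
    rw [← ZMod.natCast_eq_zero_iff]
    push_cast
    rfl
  rw [← natCard_roots_zmod k hd, Nat.count_eq_card_filter_range, Nat.card_eq_fintype_card,
    Fintype.card_subtype]
  refine card_nbij' (fun n ↦ (n : ZMod d)) ZMod.val (fun n hn ↦ ?_) (fun a ha ↦ ?_)
    (fun n hn ↦ ?_) fun a _ ↦ ZMod.natCast_zmod_val a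
  · exact mem_filter.mpr ⟨mem_univ _, (dvd_iff n).mp (mem_filter.mp hn).2⟩
  · refine mem_filter.mpr ⟨mem_range.mpr (ZMod.val_lt a), (dvd_iff _).mpr ?_⟩
    rw [ZMod.natCast_zmod_val]
    exact (mem_filter.mp ha).2
  · exact ZMod.val_cast_of_lt (mem_range.mp (mem_filter.mp hn).1)

theorem periodic_dvd_mul_add (d k : ℕ) : Function.Periodic (fun n ↦ d ∣ n * (n + k)) d := by
  intro n
  have expand : (n + d) * (n + d + k) = n * (n + k) + d * (2 * n + k + d) := by ring
  simp only [expand, Nat.dvd_add_left (dvd_mul_right d _)]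

theorem card_divisors_filter_coprime_le (k : ℕ) {n : ℕ} (hn : n ≠ 0) :
    #{b ∈ n.divisors | b.Coprime k} ≤ pairRootCount k n := by
  induction n using induction_on_primes with
  | zero => exact absurd rfl hn
  | one => exact (card_filter_le _ _).trans (by simp [pairRootCount_one])
  | prime_mul p m hp ih =>
    have hm : m ≠ 0 := right_ne_zero_of_mul hn
    have mem_of_coprime {b : ℕ} (hb : b ∣ p * m) (hbk : b.Coprime k) (hbp : b.Coprime p) :
        b ∈ {b ∈ m.divisors | b.Coprime k} :=
      mem_filter.mpr ⟨Nat.mem_divisors.mpr ⟨hbp.dvd_of_dvd_mul_left hb, hm⟩, hbk⟩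
    rw [pairRootCount_mul k hp.ne_zero hm, pairRootCount_prime k hp]
    refine le_trans ?_ (Nat.mul_le_mul_left _ (ih hm))
    split_ifs with hpk
    · rw [one_mul]
      refine card_le_card fun b hb ↦ ?_
      obtain ⟨hb, hbk⟩ := mem_filter.mp hb
      exact mem_of_coprime (Nat.dvd_of_mem_divisors hb) hbk (hbk.coprime_dvd_right hpk)
    · have subset_union : {b ∈ (p * m).divisors | b.Coprime k} ⊆
          {b ∈ m.divisors | b.Coprime k} ∪ {b ∈ m.divisors | b.Coprime k}.image (p * ·) := by
        intro b hb
        obtain ⟨hb, hbk⟩ := mem_filter.mp hb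
        replace hb := Nat.dvd_of_mem_divisors hb
        rcases (Nat.coprime_or_dvd_of_prime hp b) with hpb | ⟨c, rfl⟩
        · exact mem_union_left _ (mem_of_coprime hb hbk hpb.symm)
        · have hcm : c ∣ m := Nat.dvd_of_mul_dvd_mul_left hp.pos hb
          exact mem_union_right _ (mem_image.mpr ⟨c, mem_filter.mpr
            ⟨Nat.mem_divisors.mpr ⟨hcm, hm⟩, hbk.coprime_mul_left⟩, rfl⟩)
      calc #{b ∈ (p * m).divisors | b.Coprime k}
          ≤ #{b ∈ m.divisors | b.Coprime k} + #({b ∈ m.divisors | b.Coprime k}.image (p * ·)) :=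
            (card_le_card subset_union).trans (card_union_le _ _)
        _ ≤ 2 * #{b ∈ m.divisors | b.Coprime k} := by
            rw [two_mul]
            exact Nat.add_le_add_left card_image_le _

/-- The density `n ↦ pairRootCount k n / n` of the multiples of `n` among the values of
`X (X + k)`, as a completely multiplicative function; its value at `0` is `0`. -/
noncomputable def pairDensity (k : ℕ) : ℕ →* ℝ where
  toFun n := pairRootCount k n / n
  map_one' := by simp [pairRootCount_one]
  map_mul' m n := by
    rcases eq_or_ne m 0 with rfl | hm
    · simp
    rcases eq_or_ne n 0 with rfl | hn
    · simp
    rw [pairRootCount_mul k hm hn]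
    push_cast
    rw [mul_div_mul_comm]

theorem pairDensity_apply (k n : ℕ) : pairDensity k n = pairRootCount k n / n := rfl

theorem pairDensity_nonneg (k n : ℕ) : 0 ≤ pairDensity k n := by
  rw [pairDensity_apply]
  positivity

theorem pairDensity_pos_of_prime (k : ℕ) {p : ℕ} (hp : p.Prime) : 0 < pairDensity k p := by
  have := hp.pos
  rw [pairDensity_apply, pairRootCount_prime k hp]
  split_ifs <;> positivity

theorem pairDensity_lt_one_of_prime {k p : ℕ} (hk : Even k) (hp : p.Prime) :
    pairDensity k p < 1 := by
  rw [pairDensity_apply, div_lt_one (by exact_mod_cast hp.pos)]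
  exact_mod_cast pairRootCount_lt_of_prime hk hp

theorem harmonic_mul_sum_coprime_inv_le_sum_pairDensity (k y : ℕ) :
    (harmonic y : ℝ) * ∑ b ∈ Icc 1 y with b.Coprime k, (b : ℝ)⁻¹ ≤
      ∑ n ∈ Icc 1 (y ^ 2), pairDensity k n := by
  let pairs : Finset (ℕ × ℕ) := Icc 1 y ×ˢ {b ∈ Icc 1 y | b.Coprime k}
  have mem_pairs {q : ℕ × ℕ} :
      q ∈ pairs ↔ (1 ≤ q.1 ∧ q.1 ≤ y) ∧ (1 ≤ q.2 ∧ q.2 ≤ y) ∧ q.2.Coprime k := by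
    simp [pairs]
  have mul_mem : ∀ q ∈ pairs, q.1 * q.2 ∈ Icc 1 (y ^ 2) := by
    intro q hq
    obtain ⟨⟨ha, hay⟩, ⟨hb, hby⟩, -⟩ := mem_pairs.mp hq
    exact mem_Icc.mpr ⟨Nat.mul_pos ha hb, (Nat.mul_le_mul hay hby).trans_eq (sq y).symm⟩
  have card_fiber_le {n : ℕ} (hn : n ≠ 0) : #{q ∈ pairs | q.1 * q.2 = n} ≤ pairRootCount k n := by
    refine le_trans (card_le_card_of_injOn Prod.snd (fun q hq ↦ ?_) fun q hq q' hq' h ↦ ?_)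
      (card_divisors_filter_coprime_le k hn)
    · obtain ⟨hq, hqn⟩ := mem_filter.mp hq
      exact mem_filter.mpr
        ⟨Nat.mem_divisors.mpr ⟨Dvd.intro_left _ hqn, hn⟩, (mem_pairs.mp hq).2.2⟩
    · have hqn : q.1 * q.2 = n := (mem_filter.mp hq).2
      have hqn' : q'.1 * q'.2 = n := (mem_filter.mp hq').2
      have hq2 : q.2 ≠ 0 := right_ne_zero_of_mul (hqn ▸ hn)
      refine Prod.ext (mul_right_cancel₀ hq2 ?_) h
      rw [hqn, h, hqn']
  calc (harmonic y : ℝ) * ∑ b ∈ Icc 1 y with b.Coprime k, (b : ℝ)⁻¹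
      = ∑ q ∈ pairs, ((q.1 * q.2 : ℕ) : ℝ)⁻¹ := by
        rw [harmonic_eq_sum_Icc]
        push_cast
        simp only [pairs, sum_product, sum_mul_sum, mul_inv]
    _ = ∑ n ∈ Icc 1 (y ^ 2), #{q ∈ pairs | q.1 * q.2 = n} * (n : ℝ)⁻¹ := by
        rw [← sum_fiberwise_of_maps_to mul_mem]
        refine sum_congr rfl fun n _ ↦ ?_
        rw [sum_congr rfl fun q hq ↦ by rw [(mem_filter.mp hq).2], sum_const, nsmul_eq_mul]
    _ ≤ ∑ n ∈ Icc 1 (y ^ 2), pairDensity k n := by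
        refine sum_le_sum fun n hn ↦ ?_
        have := card_fiber_le (Nat.ne_of_gt (mem_Icc.mp hn).1)
        rw [pairDensity_apply, div_eq_mul_inv]
        gcongr

theorem totient_div_self_mul_log_sq_le_sum_pairDensity {k : ℕ} (hk : k ≠ 0) (y : ℕ) :
    (k.totient : ℝ) / k * Real.log (y + 1) ^ 2 ≤ ∑ n ∈ Icc 1 (y ^ 2), pairDensity k n := by
  have log_le : Real.log (y + 1) ≤ harmonic y := by
    exact_mod_cast log_add_one_le_harmonic y
  have log_nonneg : 0 ≤ Real.log (y + 1) := Real.log_nonneg (by linarith [y.cast_nonneg (α := ℝ)])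
  calc (k.totient : ℝ) / k * Real.log (y + 1) ^ 2
      ≤ k.totient / k * (harmonic y : ℝ) ^ 2 := by gcongr
    _ = (harmonic y : ℝ) * (k.totient / k * harmonic y) := by ring
    _ ≤ (harmonic y : ℝ) * ∑ b ∈ Icc 1 y with b.Coprime k, (b : ℝ)⁻¹ :=
        mul_le_mul_of_nonneg_left (totient_div_self_mul_harmonic_le hk y) (log_nonneg.trans log_le)
    _ ≤ ∑ n ∈ Icc 1 (y ^ 2), pairDensity k n :=
        harmonic_mul_sum_coprime_inv_le_sum_pairDensity k y

end PairDensity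

section PairSieve

open BoundingSieve
open scoped ArithmeticFunction.omega

theorem selbergSupport_eq_of_prodPrimes_eq_primorial {s : BoundingSieve} {z : ℕ}
    (hs : s.prodPrimes = primorial z) : selbergSupport s z = {l ∈ Icc 1 z | Squarefree l} := by
  ext l
  simp only [mem_selbergSupport, hs, mem_filter, mem_Icc]
  constructor
  · rintro ⟨hl, hlz⟩
    have hl_sq : Squarefree l := (squarefree_primorial z).squarefree_of_dvd hl
    exact ⟨⟨hl_sq.ne_zero.pos, hlz⟩, hl_sq⟩
  · rintro ⟨⟨-, hlz⟩, hl⟩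
    exact ⟨hl.dvd_primorial.trans (primorial_dvd_primorial hlz), hlz⟩

theorem sum_Icc_le_selbergSum {s : BoundingSieve} {z : ℕ} (hs : s.prodPrimes = primorial z)
    {f : ℕ →* ℝ} (hsf : ∀ n, s.nu n = f n) (hf : ∀ n, 0 ≤ f n)
    (hf_lt : ∀ p, p.Prime → f p < 1) : ∑ n ∈ Icc 1 z, f n ≤ selbergSum s z := by
  rw [selbergSum, selbergSupport_eq_of_prodPrimes_eq_primorial hs]
  simp only [selbergTerms_apply, hsf]
  exact sum_Icc_le_sum_squarefree_mul_prod hf hf_lt z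

theorem three_pow_cardDistinctFactors_le {n : ℕ} (hn : n ≠ 0) : 3 ^ ω n ≤ n ^ 2 :=
  calc 3 ^ ω n = ∏ _p ∈ n.primeFactors, 3 := by
        rw [prod_const]; rfl
    _ ≤ ∏ p ∈ n.primeFactors, p ^ 2 :=
        prod_le_prod' fun p hp ↦ by nlinarith [(Nat.prime_of_mem_primeFactors hp).two_le]
    _ = (∏ p ∈ n.primeFactors, p) ^ 2 := prod_pow _ _ _
    _ ≤ n ^ 2 := Nat.pow_le_pow_left (Nat.le_of_dvd hn.pos (Nat.prod_primeFactors_dvd n)) 2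

variable {k : ℕ} (hk : Even k) (N z : ℕ)

/-- The sieve problem for the values `n (n + k)`, `n < N`, sifted by the primes up to `z`. For odd
`k` all these values are even, so the local density at `2` would be `1`. -/
noncomputable def pairSieve : BoundingSieve where
  support := (range N).image fun n ↦ n * (n + k)
  prodPrimes := primorial z
  prodPrimes_squarefree := squarefree_primorial z
  weights _ := 1
  weights_nonneg _ := zero_le_one
  totalMass := N
  nu := ⟨pairDensity k, by simp [pairDensity_apply]⟩
  nu_mult := ⟨map_one (pairDensity k), fun _ ↦ map_mul (pairDensity k) _ _⟩
  nu_pos_of_prime _ hp _ := pairDensity_pos_of_prime k hp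
  nu_lt_one_of_prime _ hp _ := pairDensity_lt_one_of_prime hk hp

theorem sum_pairSieve_support_ite (P : ℕ → Prop) [DecidablePred P] :
    ∑ m ∈ (pairSieve hk N z).support, (if P m then 1 else 0 : ℝ) =
      Nat.count (fun n ↦ P (n * (n + k))) N := by
  have strictMono_mul_add : StrictMono fun n : ℕ ↦ n * (n + k) := fun m n hmn ↦ by
    dsimp only
    gcongr
  rw [pairSieve, sum_image strictMono_mul_add.injective.injOn, Nat.count_eq_card_filter_range,
    sum_boole]

theorem siftedSum_pairSieve :
    (pairSieve hk N z).siftedSum =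
      Nat.count (fun n ↦ (primorial z).Coprime (n * (n + k))) N :=
  sum_pairSieve_support_ite hk N z (primorial z).Coprime

theorem abs_rem_pairSieve_le {d : ℕ} (hd : Squarefree d) :
    |(pairSieve hk N z).rem d| ≤ d := by
  have multSum_eq : (pairSieve hk N z).multSum d = Nat.count (fun n ↦ d ∣ n * (n + k)) N :=
    sum_pairSieve_support_ite hk N z (d ∣ ·)
  have count_le := abs_count_sub_le_of_periodic hd.ne_zero (periodic_dvd_mul_add d k) N
  have rootCount_le : pairRootCount k d ≤ d := count_dvd_mul_add k hd ▸ Nat.count_le _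
  rw [count_dvd_mul_add k hd] at count_le
  rw [rem, multSum_eq]
  exact count_le.trans (by exact_mod_cast rootCount_le)

theorem sum_three_pow_mul_abs_rem_pairSieve_le :
    ∑ d ∈ (pairSieve hk N z).prodPrimes.divisors with d ≤ z ^ 2,
      3 ^ ω d * |(pairSieve hk N z).rem d| ≤ (z : ℝ) ^ 8 := by
  have term_le : ∀ d ∈ (pairSieve hk N z).prodPrimes.divisors.filter (· ≤ z ^ 2),
      3 ^ ω d * |(pairSieve hk N z).rem d| ≤ (z : ℝ) ^ 6 := by
    intro d hd
    obtain ⟨hdP, hdz⟩ := mem_filter.mp hd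
    have hd_sq : Squarefree d := squarefree_of_dvd_prodPrimes (Nat.dvd_of_mem_divisors hdP)
    have hdz : (d : ℝ) ≤ (z : ℝ) ^ 2 := by exact_mod_cast hdz
    calc 3 ^ ω d * |(pairSieve hk N z).rem d| ≤ (d : ℝ) ^ 2 * d := by
          gcongr
          · exact_mod_cast three_pow_cardDistinctFactors_le hd_sq.ne_zero
          · exact abs_rem_pairSieve_le hk N z hd_sq
      _ ≤ ((z : ℝ) ^ 2) ^ 2 * (z : ℝ) ^ 2 := by gcongr
      _ = (z : ℝ) ^ 6 := by ring
  have card_le : #((pairSieve hk N z).prodPrimes.divisors.filter (· ≤ z ^ 2)) ≤ z ^ 2 := by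
    refine (card_le_card fun d hd ↦ ?_).trans_eq (Nat.card_Icc 1 (z ^ 2))
    obtain ⟨hdP, hdz⟩ := mem_filter.mp hd
    exact mem_Icc.mpr ⟨Nat.pos_of_mem_divisors hdP, hdz⟩
  calc _ ≤ #((pairSieve hk N z).prodPrimes.divisors.filter (· ≤ z ^ 2)) * (z : ℝ) ^ 6 := by
        simpa only [nsmul_eq_mul] using sum_le_card_nsmul _ _ _ term_le
    _ ≤ (z : ℝ) ^ 2 * (z : ℝ) ^ 6 := by
        gcongr
        exact_mod_cast card_le
    _ = (z : ℝ) ^ 8 := by ring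

end PairSieve

section PrimePairs

/-- The number of `n < N` such that both `n` and `n + k` are prime. -/
def primePairCount (k N : ℕ) : ℕ := Nat.count (fun n ↦ n.Prime ∧ (n + k).Prime) N

theorem primePairCount_le_count_coprime_add (k N z : ℕ) :
    primePairCount k N ≤
      Nat.count (fun n ↦ (primorial z).Coprime (n * (n + k))) N + (z + 1) := by
  have coprime_of_lt {q : ℕ} (hq : q.Prime) (hzq : z < q) : (primorial z).Coprime q :=
    ((Nat.Prime.coprime_iff_not_dvd hq).mpr (hq.dvd_primorial_iff.not.mpr hzq.not_ge)).symm
  simp only [primePairCount, Nat.count_eq_card_filter_range]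
  rw [← card_range (z + 1)]
  refine (card_le_card fun n hn ↦ ?_).trans (card_union_le _ _)
  obtain ⟨hnN, hn, hnk⟩ := mem_filter.mp hn
  rcases lt_or_ge z n with hzn | hnz
  · exact mem_union_left _ (mem_filter.mpr ⟨hnN,
      (coprime_of_lt hn hzn).mul_right (coprime_of_lt hnk (hzn.trans_le le_self_add))⟩)
  · exact mem_union_right _ (mem_range_succ_iff.mpr hnz)

variable {k : ℕ} (N : ℕ)

theorem primePairCount_le_of_even (hk : Even k) (hk₀ : k ≠ 0) {y : ℕ} (hy : y ≠ 0) :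
    (primePairCount k N : ℝ) ≤
      3 * (y : ℝ) ^ 16 + k / k.totient * (N / Real.log (y + 1) ^ 2) := by
  have one_le_y : (1 : ℝ) ≤ y := by exact_mod_cast hy.pos
  have log_pos : 0 < Real.log (y + 1) := Real.log_pos (by linarith)
  set s := pairSieve hk N (y ^ 2)
  have le_selbergSum : (k.totient : ℝ) / k * Real.log (y + 1) ^ 2 ≤ selbergSum s (y ^ 2) :=
    (totient_div_self_mul_log_sq_le_sum_pairDensity hk₀ y).trans <|
      sum_Icc_le_selbergSum rfl (fun _ ↦ rfl) (pairDensity_nonneg k)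
        fun p hp ↦ pairDensity_lt_one_of_prime hk hp
  have siftedSum_le : s.siftedSum ≤ k / k.totient * (N / Real.log (y + 1) ^ 2) + (y : ℝ) ^ 16 :=
    calc s.siftedSum ≤ s.totalMass / selbergSum s (y ^ 2) + ((y ^ 2 : ℕ) : ℝ) ^ 8 := by
          grw [siftedSum_le_div_selbergSum_add (pow_ne_zero 2 hy),
            sum_three_pow_mul_abs_rem_pairSieve_le]
      _ ≤ N / (k.totient / k * Real.log (y + 1) ^ 2) + ((y ^ 2 : ℕ) : ℝ) ^ 8 := by
          gcongr
          exact le_rfl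
      _ = k / k.totient * (N / Real.log (y + 1) ^ 2) + (y : ℝ) ^ 16 := by
          push_cast
          field_simp
  calc (primePairCount k N : ℝ)
      ≤ s.siftedSum + ((y : ℝ) ^ 2 + 1) := by
        rw [siftedSum_pairSieve]
        exact_mod_cast primePairCount_le_count_coprime_add k N (y ^ 2)
    _ ≤ k / k.totient * (N / Real.log (y + 1) ^ 2) + (y : ℝ) ^ 16 +
          ((y : ℝ) ^ 16 + (y : ℝ) ^ 16) := by
        gcongr
        · norm_num
        · exact one_le_pow₀ one_le_y
    _ = 3 * (y : ℝ) ^ 16 + k / k.totient * (N / Real.log (y + 1) ^ 2) := by ring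

theorem primePairCount_le_one_of_odd (hk : Odd k) : primePairCount k N ≤ 1 := by
  have eq_two {n : ℕ} (hn : n.Prime) (hnk : (n + k).Prime) : n = 2 := by
    by_contra hn2
    have : n + k = 2 := hnk.even_iff.mp ((hn.odd_of_ne_two hn2).add_odd hk)
    have := hn.two_le
    have := hk.pos
    lia
  rw [primePairCount, Nat.count_eq_card_filter_range, card_le_one]
  intro m hm n hn
  obtain ⟨-, hm, hmk⟩ := mem_filter.mp hm
  obtain ⟨-, hn, hnk⟩ := mem_filter.mp hn
  rw [eq_two hm hmk, eq_two hn hnk]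

theorem primePairCount_le (hk₀ : k ≠ 0) {y : ℕ} (hy : y ≠ 0) :
    (primePairCount k N : ℝ) ≤
      3 * (y : ℝ) ^ 16 + k / k.totient * (N / Real.log (y + 1) ^ 2) := by
  rcases k.even_or_odd with hk | hk
  · exact primePairCount_le_of_even N hk hk₀ hy
  · have one_le : (1 : ℝ) ≤ (y : ℝ) ^ 16 := one_le_pow₀ (by exact_mod_cast hy.pos)
    have count_le_one : (primePairCount k N : ℝ) ≤ 1 := by
      exact_mod_cast primePairCount_le_one_of_odd N hk
    have : 0 ≤ (k : ℝ) / k.totient * (N / Real.log (y + 1) ^ 2) := by positivity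
    linarith

end PrimePairs

section SmallGaps

open Filter

/-- The number of `n` with `p_n ≤ x` and `p_{n+1} - p_n ≤ h`. Since `n < p_n`, the range contains
every index with `p_n ≤ x`. -/
noncomputable def smallGapCount (x h : ℝ) : ℕ :=
  #{n ∈ range (⌊x⌋₊ + 1) | (nthPrime n : ℝ) ≤ x ∧ (nthPrime (n + 1) : ℝ) - nthPrime n ≤ h}

theorem prime_nthPrime (n : ℕ) : (nthPrime n).Prime := Nat.prime_nth_prime n

theorem nthPrime_strictMono : StrictMono nthPrime := Nat.nth_strictMono Nat.infinite_setOfPred_prime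

theorem smallGapCount_le_primePi (x h : ℝ) : smallGapCount x h ≤ primePi x := by
  rw [primePi, ← Nat.primesLE_card_eq_primeCounting]
  refine card_le_card_of_injOn nthPrime (fun n hn ↦ ?_) nthPrime_strictMono.injective.injOn
  exact Nat.mem_primesLE.mpr ⟨Nat.le_floor (mem_filter.mp hn).2.1, prime_nthPrime n⟩

theorem smallGapCount_le_sum_primePairCount (x h : ℝ) :
    smallGapCount x h ≤ ∑ k ∈ Ioc 0 ⌊h⌋₊, primePairCount k (⌊x⌋₊ + 1) := by
  simp only [primePairCount, Nat.count_eq_card_filter_range]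
  refine le_trans (card_le_card_of_injOn nthPrime (fun n hn ↦ ?_)
    nthPrime_strictMono.injective.injOn) card_biUnion_le
  obtain ⟨-, hnx, hnh⟩ := mem_filter.mp hn
  have gap_pos : nthPrime n < nthPrime (n + 1) := nthPrime_strictMono n.lt_succ_self
  refine mem_biUnion.mpr ⟨nthPrime (n + 1) - nthPrime n, mem_Ioc.mpr ⟨?_, ?_⟩,
    mem_filter.mpr ⟨mem_range_succ_iff.mpr (Nat.le_floor hnx), prime_nthPrime n, ?_⟩⟩
  · exact Nat.sub_pos_of_lt gap_pos
  · exact Nat.le_floor (by rwa [Nat.cast_sub gap_pos.le])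
  · rw [Nat.add_sub_cancel' gap_pos.le]
    exact prime_nthPrime (n + 1)

theorem primePairCount_floor_le {k : ℕ} (hk : k ≠ 0) {x : ℝ} (hx : 1 < x) :
    (primePairCount k (⌊x⌋₊ + 1) : ℝ) ≤
      3 * √x + k / k.totient * (2048 * (x / Real.log x ^ 2)) := by
  have x_pos : 0 < x := one_pos.trans hx
  have log_pos : 0 < Real.log x := Real.log_pos hx
  set u := x ^ (1 / 32 : ℝ)
  have u_pow : u ^ 16 = √x := by
    rw [← Real.rpow_mul_natCast x_pos.le, Real.sqrt_eq_rpow]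
    norm_num
  have log_u : Real.log u = Real.log x / 32 := by
    rw [Real.log_rpow x_pos]
    ring
  have one_le_u : 1 ≤ u := Real.one_le_rpow hx.le (by norm_num)
  have log_le : Real.log x / 32 ≤ Real.log (⌊u⌋₊ + 1) := by
    rw [← log_u]
    exact Real.log_le_log (one_pos.trans_le one_le_u) (Nat.lt_floor_add_one u).le
  have floor_le : ((⌊x⌋₊ + 1 : ℕ) : ℝ) ≤ 2 * x := by
    push_cast
    linarith [Nat.floor_le x_pos.le]
  calc (primePairCount k (⌊x⌋₊ + 1) : ℝ)
      ≤ 3 * (⌊u⌋₊ : ℝ) ^ 16 +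
          k / k.totient * ((⌊x⌋₊ + 1 : ℕ) / Real.log (⌊u⌋₊ + 1) ^ 2) :=
        primePairCount_le _ hk (Nat.floor_pos.mpr one_le_u).ne'
    _ ≤ 3 * u ^ 16 + k / k.totient * (2 * x / (Real.log x / 32) ^ 2) := by
        gcongr
        exact Nat.floor_le (zero_le_one.trans one_le_u)
    _ = 3 * √x + k / k.totient * (2048 * (x / Real.log x ^ 2)) := by
        rw [u_pow]
        ring

theorem smallGapCount_le {x h : ℝ} (hx : 1 < x) (hh : 0 ≤ h) :
    (smallGapCount x h : ℝ) ≤ h * (3 * √x + 8192 * (x / Real.log x ^ 2)) := by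
  calc (smallGapCount x h : ℝ)
      ≤ ∑ k ∈ Ioc 0 ⌊h⌋₊, (primePairCount k (⌊x⌋₊ + 1) : ℝ) := by
        exact_mod_cast smallGapCount_le_sum_primePairCount x h
    _ ≤ ∑ k ∈ Ioc 0 ⌊h⌋₊, (3 * √x + k / k.totient * (2048 * (x / Real.log x ^ 2))) :=
        sum_le_sum fun k hk ↦ primePairCount_floor_le (mem_Ioc.mp hk).1.ne' hx
    _ = ⌊h⌋₊ * (3 * √x) +
          (∑ k ∈ Ioc 0 ⌊h⌋₊, (k : ℝ) / k.totient) * (2048 * (x / Real.log x ^ 2)) := by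
        rw [sum_add_distrib, sum_const, nsmul_eq_mul, Nat.card_Ioc, Nat.sub_zero, sum_mul]
    _ ≤ ⌊h⌋₊ * (3 * √x) + (4 * ⌊h⌋₊) * (2048 * (x / Real.log x ^ 2)) := by
        gcongr
        exact sum_self_div_totient_le _
    _ = ⌊h⌋₊ * (3 * √x + 8192 * (x / Real.log x ^ 2)) := by ring
    _ ≤ h * (3 * √x + 8192 * (x / Real.log x ^ 2)) := by
        gcongr
        exact Nat.floor_le hh

theorem eventually_three_mul_sqrt_le : ∀ᶠ x : ℝ in atTop, 3 * √x ≤ x / Real.log x ^ 2 := by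
  have log_isLittleO := isLittleO_log_rpow_atTop (show (0 : ℝ) < 1 / 4 by norm_num)
  filter_upwards [log_isLittleO.bound (show (0 : ℝ) < 1 / 2 by norm_num), eventually_gt_atTop 1]
    with x log_le hx
  have x_pos : 0 < x := one_pos.trans hx
  have log_pos : 0 < Real.log x := Real.log_pos hx
  have rpow_sq : (x ^ (1 / 4 : ℝ)) ^ 2 = √x := by
    rw [← Real.rpow_mul_natCast x_pos.le, Real.sqrt_eq_rpow]
    norm_num
  rw [Real.norm_of_nonneg log_pos.le, Real.norm_of_nonneg (by positivity)] at log_le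
  rw [le_div_iff₀ (by positivity)]
  calc 3 * √x * Real.log x ^ 2
      ≤ 3 * √x * (1 / 2 * x ^ (1 / 4 : ℝ)) ^ 2 := by gcongr
    _ = 3 / 4 * (√x * √x) := by
        rw [mul_pow, rpow_sq]
        ring
    _ ≤ x := by
        rw [Real.mul_self_sqrt x_pos.le]
        linarith

theorem eventually_div_log_le_primePi :
    ∀ᶠ x : ℝ in atTop, x / (2 * Real.log x) ≤ primePi x := by
  have log_isLittleO := Real.isLittleO_log_id_atTop
  filter_upwards [log_isLittleO.bound (show (0 : ℝ) < 1 / 16 by norm_num), eventually_ge_atTop 16]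
    with x log_le hx
  have log_pos : 0 < Real.log x := Real.log_pos (by linarith)
  rw [Real.norm_of_nonneg log_pos.le, id, Real.norm_of_nonneg (by linarith)] at log_le
  have log_add_two_le : Real.log (x + 2) ≤ Real.log 2 + Real.log x := by
    rw [← Real.log_mul two_ne_zero (by linarith)]
    exact Real.log_le_log (by linarith) (by linarith)
  have half_le : x / 2 ≤ (x - 1) * Real.log 2 - Real.log (x + 2) := by
    nlinarith [Real.log_two_gt_d9, Real.log_two_lt_d9]
  calc x / (2 * Real.log x) = x / 2 / Real.log x := by rw [div_div]
    _ ≤ ((x - 1) * Real.log 2 - Real.log (x + 2)) / Real.log x := by gcongr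
    _ ≤ primePi x := Chebyshev.pi_ge' (by linarith)

theorem eventually_smallGapCount_le_mul_primePi :
    ∀ᶠ x : ℝ in atTop, ∀ h : ℝ, 0 ≤ h →
      (smallGapCount x h : ℝ) ≤ 16386 * (h / Real.log x) * primePi x := by
  filter_upwards [eventually_three_mul_sqrt_le, eventually_div_log_le_primePi,
    eventually_gt_atTop 1] with x sqrt_le primePi_ge hx h hh
  have log_pos : 0 < Real.log x := Real.log_pos hx
  calc (smallGapCount x h : ℝ)
      ≤ h * (3 * √x + 8192 * (x / Real.log x ^ 2)) := smallGapCount_le hx hh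
    _ ≤ h * (x / Real.log x ^ 2 + 8192 * (x / Real.log x ^ 2)) := by gcongr
    _ = 16386 * (h / Real.log x) * (x / (2 * Real.log x)) := by
        field_simp
        ring
    _ ≤ 16386 * (h / Real.log x) * primePi x := by gcongr

end SmallGaps

/-- **Theorem 3 (GPY IV), first part.** There is an absolute constant `C` such that for any
`h > 2` and all sufficiently large `x`,
`#{n : p_n ≤ x, p_{n+1} - p_n ≤ h} ≤ C · min(h/log x, 1) · π(x)`. -/
theorem small_gaps_sparse :
    ∃ C : ℝ, 0 < C ∧ ∃ x₀ : ℝ, ∀ x : ℝ, x₀ ≤ x → ∀ h : ℝ, 2 < h →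
      (((Finset.range (⌊x⌋₊ + 1)).filter (fun n =>
          (nthPrime n : ℝ) ≤ x ∧ ((nthPrime (n+1) : ℝ) - nthPrime n) ≤ h)).card : ℝ)
        ≤ C * min (h / Real.log x) 1 * (primePi x : ℝ) := by
  obtain ⟨x₀, hx₀⟩ := Filter.eventually_atTop.mp eventually_smallGapCount_le_mul_primePi
  refine ⟨16386, by norm_num, x₀, fun x hx h hh ↦ ?_⟩
  change (smallGapCount x h : ℝ) ≤ _
  rcases min_choice (h / Real.log x) 1 with hmin | hmin <;> rw [hmin]
  · exact hx₀ x hx h (by linarith)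
  · have trivial_bound : (smallGapCount x h : ℝ) ≤ primePi x := by
      exact_mod_cast smallGapCount_le_primePi x h
    linarith [(primePi x).cast_nonneg (α := ℝ)]
end

section
/- If h = h(x) satisfies h(x)/log x → 0 as x → ∞, then #{n : p_n ≤ x, p_{n+1} − p_n ≤ h(x)} = o(π(x)) as x → ∞; i.e., very small gaps between consecutive primes do not constitute a positive proportion of all gaps. -/
open Finset

/-!
Write `ν(d) = τ(d) / d`. Selberg's sieve, applied to `n (n + k)` with the primes not dividing `2k`,
bounds the number of `p ≤ N` with `p + k` prime by `O(S(k) N / log² N)`, where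
`S(k) = ∑_{d ∣ 2k} ν(d)`. Interchanging summations shows that `S` is bounded on average, so only
`O(H N / log² N)` primes `p ≤ N` have another prime in `(p, p + H]`. By Chebyshev's lower bound for
`π(N)` this is `O((H / log N) π(N))`, which is `o(π(N))` when `H = o(log N)`.
-/

namespace SmallPrimeGaps
open ArithmeticFunction BoundingSieve
open scoped ArithmeticFunction.Moebius ArithmeticFunction.zeta

theorem sum_le_sum_of_injOn {ι κ M : Type*} [AddCommMonoid M] [PartialOrder M]
    [IsOrderedAddMonoid M] {s : Finset ι} {t : Finset κ} {f : ι → M} {g : κ → M} (i : ι → κ)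
    (hmaps : Set.MapsTo i s t) (hinj : Set.InjOn i s) (hle : ∀ x ∈ s, f x ≤ g (i x))
    (hg : ∀ y ∈ t, 0 ≤ g y) : ∑ x ∈ s, f x ≤ ∑ y ∈ t, g y := by
  classical
  calc ∑ x ∈ s, f x ≤ ∑ x ∈ s, g (i x) := sum_le_sum hle
    _ = ∑ y ∈ s.image i, g y := (sum_image hinj).symm
    _ ≤ ∑ y ∈ t, g y :=
      sum_le_sum_of_subset_of_nonneg (image_subset_iff.2 hmaps) fun y hy _ => hg y hy

section SelbergSieve

theorem sum_moebius_divisors_filter_dvd {l m : ℕ} (hm : Squarefree m) :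
    ∑ d ∈ m.divisors with l ∣ d, μ d = if l = m then μ l else 0 := by
  by_cases hlm : l ∣ m
  swap
  · rw [if_neg (by rintro rfl; exact hlm dvd_rfl)]
    refine sum_eq_zero fun d hd => absurd ?_ hlm
    rw [mem_filter, Nat.mem_divisors] at hd
    exact hd.2.trans hd.1.1
  obtain ⟨e, rfl⟩ := hlm
  have hl : 0 < l := Nat.pos_of_ne_zero (left_ne_zero_of_mul hm.ne_zero)
  have he : e ≠ 0 := right_ne_zero_of_mul hm.ne_zero
  have hle : l.Coprime e := Nat.coprime_of_squarefree_mul hm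
  have hset : {d ∈ (l * e).divisors | l ∣ d} = e.divisors.image (l * ·) := by
    ext d
    simp only [mem_filter, Nat.mem_divisors, mem_image]
    constructor
    · rintro ⟨⟨hd, -⟩, c, rfl⟩
      exact ⟨c, ⟨Nat.dvd_of_mul_dvd_mul_left hl hd, he⟩, rfl⟩
    · rintro ⟨c, ⟨hc, -⟩, rfl⟩
      exact ⟨⟨mul_dvd_mul_left l hc, hm.ne_zero⟩, dvd_mul_right l c⟩
  have hmul : ∀ c ∈ e.divisors, μ (l * c) = μ l * μ c := fun c hc =>
    isMultiplicative_moebius.map_mul_of_coprime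
      (hle.coprime_dvd_right (Nat.dvd_of_mem_divisors hc))
  have hsum : ∑ c ∈ e.divisors, μ c = if e = 1 then 1 else 0 := by
    rw [← coe_mul_zeta_apply, moebius_mul_coe_zeta, one_apply]
  have hiff : l = l * e ↔ e = 1 := by rw [eq_comm, mul_eq_left₀ hl.ne']
  rw [hset, sum_image fun a _ b _ h => Nat.eq_of_mul_eq_mul_left hl h, sum_congr rfl hmul,
    ← mul_sum, hsum, mul_ite, mul_one, mul_zero]
  simp only [hiff]

variable (s : BoundingSieve) (R : ℕ)

/-- The denominator `L = ∑_{l ∣ P, l ≤ R} g(l)` of the main term of Selberg's upper bound. -/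
noncomputable def selbergSum : ℝ := ∑ l ∈ s.prodPrimes.divisors with l ≤ R, s.selbergTerms l

/-- Selberg's optimal weights `λ_d`, normalised by `λ_1 = 1`. They vanish unless `d ∣ P`, because
otherwise the inner sum is empty. -/
noncomputable def selbergWeight (d : ℕ) : ℝ :=
  μ d * ((s.nu d)⁻¹ * ∑ l ∈ s.prodPrimes.divisors with l ≤ R ∧ d ∣ l, s.selbergTerms l) /
    selbergSum s R

variable {R}

theorem selbergSum_pos (hR : 1 ≤ R) : 0 < selbergSum s R :=
  sum_pos (fun _ hl => selbergTerms_pos (Nat.dvd_of_mem_divisors (mem_filter.1 hl).1))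
    ⟨1, by simpa using ⟨prodPrimes_ne_zero, hR⟩⟩

theorem selbergWeight_one (hR : 1 ≤ R) : selbergWeight s R 1 = 1 := by
  have hL : selbergSum s R ≠ 0 := (selbergSum_pos s hR).ne'
  simp only [selbergWeight, moebius_apply_one, Int.cast_one, s.nu_mult.map_one, inv_one, one_mul,
    one_dvd, and_true]
  exact div_self hL

theorem selbergWeight_eq_zero_of_lt {d : ℕ} (hd : R < d) : selbergWeight s R d = 0 := by
  have hempty : {l ∈ s.prodPrimes.divisors | l ≤ R ∧ d ∣ l} = ∅ := by
    refine filter_eq_empty_iff.2 fun l hl ⟨hlR, hdl⟩ => ?_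
    exact (Nat.le_of_dvd (Nat.pos_of_mem_divisors hl) hdl).not_gt (hlR.trans_lt hd)
  simp [selbergWeight, hempty]

theorem nu_inv_mul_selbergTerms_mul {d m : ℕ} (hdm : d * m ∣ s.prodPrimes) :
    (s.nu d)⁻¹ * s.selbergTerms (d * m) = ∑ k ∈ d.divisors, s.selbergTerms (k * m) := by
  have hd : d ∣ s.prodPrimes := (dvd_mul_right d m).trans hdm
  have hcop : d.Coprime m := Nat.coprime_of_squarefree_mul (squarefree_of_dvd_prodPrimes hdm)
  have hg : s.selbergTerms d * (s.nu d)⁻¹ = ∑ k ∈ d.divisors, s.selbergTerms k := by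
    rw [← sum_divisors_selbergTerms_eq_selbergTerms_mul_nu_inv hd, ← sum_filter,
      Nat.divisors_filter_dvd_of_dvd prodPrimes_ne_zero hd]
  rw [selbergTerms_isMultiplicative.map_mul_of_coprime hcop, ← mul_assoc, mul_comm (s.nu d)⁻¹, hg,
    sum_mul]
  refine sum_congr rfl fun k hk => ?_
  rw [selbergTerms_isMultiplicative.map_mul_of_coprime
    (hcop.coprime_dvd_left (Nat.dvd_of_mem_divisors hk))]

variable (R) in
/-- Writing `l = d m`, the left side is `∑_m g(m) ∑_{k ∣ d} g(k)`, a sum of `g(km)` over distinct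
`km ≤ R`. -/
theorem nu_inv_mul_sum_selbergTerms_le_selbergSum {d : ℕ} (hd : d ∣ s.prodPrimes) :
    (s.nu d)⁻¹ * ∑ l ∈ s.prodPrimes.divisors with l ≤ R ∧ d ∣ l, s.selbergTerms l ≤
      selbergSum s R := by
  have hd0 : d ≠ 0 := ne_zero_of_dvd_ne_zero prodPrimes_ne_zero hd
  have hcop : ∀ m, d * m ∣ s.prodPrimes → d.Coprime m := fun m h =>
    Nat.coprime_of_squarefree_mul (squarefree_of_dvd_prodPrimes h)
  rw [mul_sum, selbergSum]
  calc ∑ l ∈ s.prodPrimes.divisors with l ≤ R ∧ d ∣ l, (s.nu d)⁻¹ * s.selbergTerms l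
      = ∑ l ∈ s.prodPrimes.divisors with l ≤ R ∧ d ∣ l, ∑ k ∈ d.divisors,
          s.selbergTerms (k * (l / d)) := sum_congr rfl fun l hl => ?_
    _ = ∑ x ∈ {l ∈ s.prodPrimes.divisors | l ≤ R ∧ d ∣ l} ×ˢ d.divisors,
          s.selbergTerms (x.2 * (x.1 / d)) := (sum_product' _ _ _).symm
    _ ≤ _ := sum_le_sum_of_injOn (fun x : ℕ × ℕ => x.2 * (x.1 / d)) ?_ ?_ (fun _ _ => le_rfl)
          fun l hl => (selbergTerms_pos (Nat.dvd_of_mem_divisors (mem_filter.1 hl).1)).le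
  · simp only [mem_filter, Nat.mem_divisors] at hl
    obtain ⟨⟨hl, -⟩, -, m, rfl⟩ := hl
    rw [Nat.mul_div_cancel_left m (Nat.pos_of_ne_zero hd0), nu_inv_mul_selbergTerms_mul s hl]
  · rintro ⟨l, k⟩ hx
    simp only [coe_product, Set.mem_prod, mem_coe, mem_filter, Nat.mem_divisors] at hx
    obtain ⟨⟨⟨hl, -⟩, hlR, m, rfl⟩, hk, -⟩ := hx
    have hdvd : k * m ∣ d * m := mul_dvd_mul_right hk m
    have hdm0 : 0 < d * m := Nat.pos_of_ne_zero (ne_zero_of_dvd_ne_zero prodPrimes_ne_zero hl)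
    simp only [Nat.mul_div_cancel_left m (Nat.pos_of_ne_zero hd0), coe_filter, Set.mem_ofPred_eq,
      Nat.mem_divisors]
    exact ⟨⟨hdvd.trans hl, prodPrimes_ne_zero⟩, (Nat.le_of_dvd hdm0 hdvd).trans hlR⟩
  · rintro ⟨l, k⟩ hx ⟨l', k'⟩ hx' h
    simp only [coe_product, Set.mem_prod, mem_coe, mem_filter, Nat.mem_divisors] at hx hx'
    obtain ⟨⟨⟨hl, -⟩, -, m, rfl⟩, hk, -⟩ := hx
    obtain ⟨⟨⟨hl', -⟩, -, m', rfl⟩, hk', -⟩ := hx'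
    simp only [Nat.mul_div_cancel_left _ (Nat.pos_of_ne_zero hd0)] at h
    have hkk : k = k' := by
      rw [← Nat.gcd_eq_left hk, ← Nat.gcd_eq_left hk',
        ← (hcop m hl).symm.gcd_mul_right_cancel k, h, (hcop m' hl').symm.gcd_mul_right_cancel k']
    subst hkk
    rw [Nat.eq_of_mul_eq_mul_left (Nat.pos_of_dvd_of_pos hk (Nat.pos_of_ne_zero hd0)) h]

theorem abs_selbergWeight_le_one (hR : 1 ≤ R) {d : ℕ} (hd : d ∣ s.prodPrimes) :
    |selbergWeight s R d| ≤ 1 := by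
  have hL := selbergSum_pos s hR
  have hnonneg : 0 ≤ (s.nu d)⁻¹ *
      ∑ l ∈ s.prodPrimes.divisors with l ≤ R ∧ d ∣ l, s.selbergTerms l :=
    mul_nonneg (inv_nonneg.2 (nu_pos_of_dvd_prodPrimes hd).le) <| sum_nonneg fun l hl =>
      (selbergTerms_pos (Nat.dvd_of_mem_divisors (mem_filter.1 hl).1)).le
  have hmu : |(μ d : ℝ)| ≤ 1 := by exact_mod_cast abs_moebius_le_one
  rw [selbergWeight, abs_div, abs_mul, abs_of_pos hL, div_le_one hL, abs_of_nonneg hnonneg]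
  exact (mul_le_of_le_one_left hnonneg hmu).trans (nu_inv_mul_sum_selbergTerms_le_selbergSum s R hd)

variable (R) in
theorem nu_mul_selbergWeight {d : ℕ} (hd : d ∣ s.prodPrimes) :
    s.nu d * selbergWeight s R d =
      (∑ m ∈ s.prodPrimes.divisors with m ≤ R ∧ d ∣ m, μ d * s.selbergTerms m) /
        selbergSum s R := by
  rw [selbergWeight, ← mul_sum, ← mul_div_assoc, mul_left_comm,
    mul_inv_cancel_left₀ (nu_ne_zero hd)]

variable (R) in
theorem sum_nu_mul_selbergWeight {l : ℕ} (hl : l ∣ s.prodPrimes) :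
    (∑ d ∈ s.prodPrimes.divisors, if l ∣ d then s.nu d * selbergWeight s R d else 0) =
      if l ≤ R then μ l * s.selbergTerms l / selbergSum s R else 0 := by
  have hmoebius : ∀ m ∈ {m ∈ s.prodPrimes.divisors | m ≤ R},
      ∑ d ∈ m.divisors with l ∣ d, (μ d : ℝ) * s.selbergTerms m =
        if l = m then μ m * s.selbergTerms m else 0 := fun m hm => by
    have hmP := Nat.dvd_of_mem_divisors (mem_filter.1 hm).1
    rw [← sum_mul, ← Int.cast_sum,
      sum_moebius_divisors_filter_dvd (squarefree_of_dvd_prodPrimes hmP)]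
    split_ifs with h
    · rw [h]
    · rw [Int.cast_zero, zero_mul]
  calc (∑ d ∈ s.prodPrimes.divisors, if l ∣ d then s.nu d * selbergWeight s R d else 0)
      = (∑ d ∈ s.prodPrimes.divisors with l ∣ d,
          ∑ m ∈ s.prodPrimes.divisors with m ≤ R ∧ d ∣ m, μ d * s.selbergTerms m) /
            selbergSum s R := by
        rw [← sum_filter, sum_div]
        exact sum_congr rfl fun d hd =>
          nu_mul_selbergWeight s R (Nat.dvd_of_mem_divisors (mem_filter.1 hd).1)
    _ = (∑ m ∈ s.prodPrimes.divisors with m ≤ R,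
          ∑ d ∈ m.divisors with l ∣ d, μ d * s.selbergTerms m) / selbergSum s R := by
        congr 1
        refine sum_comm' fun d m => ?_
        simp only [mem_filter, Nat.mem_divisors]
        constructor
        · rintro ⟨⟨-, hld⟩, hm, hmR, hdm⟩
          exact ⟨⟨⟨hdm, ne_zero_of_dvd_ne_zero hm.2 hm.1⟩, hld⟩, hm, hmR⟩
        · rintro ⟨⟨⟨hdm, -⟩, hld⟩, hm, hmR⟩
          exact ⟨⟨⟨hdm.trans hm.1, hm.2⟩, hld⟩, hm, hmR, hdm⟩
    _ = if l ≤ R then μ l * s.selbergTerms l / selbergSum s R else 0 := by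
        rw [sum_congr rfl hmoebius, sum_ite_eq]
        simp only [mem_filter, Nat.mem_divisors, hl, prodPrimes_ne_zero, ne_eq, not_false_eq_true,
          true_and]
        split_ifs
        · rfl
        · exact zero_div _

theorem mainSum_lambdaSquared_selbergWeight_le (hR : 1 ≤ R) :
    s.mainSum (lambdaSquared (selbergWeight s R)) ≤ (selbergSum s R)⁻¹ := by
  have hL := selbergSum_pos s hR
  have hterm : ∀ l ∈ s.prodPrimes.divisors, (s.selbergTerms l)⁻¹ *
      (∑ d ∈ s.prodPrimes.divisors, if l ∣ d then s.nu d * selbergWeight s R d else 0) ^ 2 ≤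
        if l ≤ R then s.selbergTerms l / selbergSum s R ^ 2 else 0 := fun l hl => by
    have hlP := Nat.dvd_of_mem_divisors hl
    have hg := selbergTerms_pos hlP
    rw [sum_nu_mul_selbergWeight s R hlP]
    split_ifs
    · have hmu : (μ l : ℝ) ^ 2 ≤ 1 :=
        (sq_le_one_iff_abs_le_one _).2 (by exact_mod_cast abs_moebius_le_one)
      calc (s.selbergTerms l)⁻¹ * (μ l * s.selbergTerms l / selbergSum s R) ^ 2
          = (μ l : ℝ) ^ 2 * (s.selbergTerms l / selbergSum s R ^ 2) := by field_simp
        _ ≤ s.selbergTerms l / selbergSum s R ^ 2 := mul_le_of_le_one_left (by positivity) hmu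
    · simp
  calc s.mainSum (lambdaSquared (selbergWeight s R))
      ≤ ∑ l ∈ s.prodPrimes.divisors, if l ≤ R then s.selbergTerms l / selbergSum s R ^ 2 else 0 :=
        (mainSum_lambdaSquared_eq_sum_mul_sum_sq _).trans_le (sum_le_sum hterm)
    _ = selbergSum s R / selbergSum s R ^ 2 := by rw [← sum_filter, ← sum_div, ← selbergSum]
    _ = (selbergSum s R)⁻¹ := by field_simp

theorem abs_lambdaSquared_selbergWeight_le (hR : 1 ≤ R) {m : ℕ} (hm : m ∣ s.prodPrimes) :
    |lambdaSquared (selbergWeight s R) m| ≤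
      #{x ∈ {d ∈ s.prodPrimes.divisors | d ≤ R} ×ˢ {d ∈ s.prodPrimes.divisors | d ≤ R} |
        x.1.lcm x.2 = m} := by
  have hweight : ∀ d ∈ m.divisors, |selbergWeight s R d| ≤ if d ≤ R then 1 else 0 := fun d hd => by
    split_ifs with hdR
    · exact abs_selbergWeight_le_one s hR ((Nat.dvd_of_mem_divisors hd).trans hm)
    · rw [selbergWeight_eq_zero_of_lt s (not_le.1 hdR), abs_zero]
  have hterm : ∀ x ∈ m.divisors ×ˢ m.divisors,
      |if m = x.1.lcm x.2 then selbergWeight s R x.1 * selbergWeight s R x.2 else 0| ≤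
        if x.1.lcm x.2 = m ∧ x.1 ≤ R ∧ x.2 ≤ R then 1 else 0 := fun x hx => by
    rw [mem_product] at hx
    by_cases hlcm : x.1.lcm x.2 = m
    · rw [if_pos hlcm.symm, abs_mul]
      refine (mul_le_mul (hweight _ hx.1) (hweight _ hx.2) (abs_nonneg _)
        (by split_ifs <;> simp)).trans_eq ?_
      simp only [hlcm, true_and, ite_and, ite_mul, one_mul, zero_mul]
    · rw [if_neg (Ne.symm hlcm), if_neg (not_and_of_not_left _ hlcm), abs_zero]
  rw [lambdaSquared, ← sum_product']
  refine (abs_sum_le_sum_abs _ _).trans ((sum_le_sum hterm).trans ?_)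
  rw [← sum_filter, sum_const, nsmul_one, Nat.cast_le]
  refine card_le_card fun x hx => ?_
  simp only [mem_filter, mem_product, Nat.mem_divisors] at hx ⊢
  obtain ⟨⟨⟨hx₁, -⟩, hx₂, -⟩, hlcm, hR₁, hR₂⟩ := hx
  exact ⟨⟨⟨⟨hx₁.trans hm, prodPrimes_ne_zero⟩, hR₁⟩, ⟨hx₂.trans hm, prodPrimes_ne_zero⟩, hR₂⟩, hlcm⟩

theorem errSum_lambdaSquared_selbergWeight_le (hR : 1 ≤ R) :
    s.errSum (lambdaSquared (selbergWeight s R)) ≤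
      ∑ d ∈ s.prodPrimes.divisors with d ≤ R, ∑ e ∈ s.prodPrimes.divisors with e ≤ R,
        |s.rem (d.lcm e)| := by
  have hmaps : ∀ x ∈ {d ∈ s.prodPrimes.divisors | d ≤ R} ×ˢ {d ∈ s.prodPrimes.divisors | d ≤ R},
      x.1.lcm x.2 ∈ s.prodPrimes.divisors := fun x hx => by
    simp only [mem_product, mem_filter, Nat.mem_divisors] at hx ⊢
    exact ⟨Nat.lcm_dvd hx.1.1.1 hx.2.1.1, prodPrimes_ne_zero⟩
  rw [← sum_product', ← sum_fiberwise_of_maps_to hmaps]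
  refine sum_le_sum fun m hm => ?_
  rw [sum_congr rfl fun x hx => by rw [(mem_filter.1 hx).2], sum_const, nsmul_eq_mul]
  exact mul_le_mul_of_nonneg_right
    (abs_lambdaSquared_selbergWeight_le s hR (Nat.dvd_of_mem_divisors hm)) (abs_nonneg _)

theorem siftedSum_le_div_selbergSum_add_sum_abs_rem (hR : 1 ≤ R) (hX : 0 ≤ s.totalMass) :
    s.siftedSum ≤ s.totalMass / selbergSum s R +
      ∑ d ∈ s.prodPrimes.divisors with d ≤ R, ∑ e ∈ s.prodPrimes.divisors with e ≤ R,
        |s.rem (d.lcm e)| :=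
  calc s.siftedSum
      ≤ s.totalMass * s.mainSum (lambdaSquared (selbergWeight s R)) +
          s.errSum (lambdaSquared (selbergWeight s R)) :=
        siftedSum_le_mainSum_errSum_of_upperMoebius _
          (upperMoebius_lambdaSquared _ (selbergWeight_one s hR))
    _ ≤ _ := add_le_add
        (mul_le_mul_of_nonneg_left (mainSum_lambdaSquared_selbergWeight_le s hR) hX)
        (errSum_lambdaSquared_selbergWeight_le s hR)

end SelbergSieve

section ReciprocalSums

/-- The arithmetic function `n ↦ 1 / n`. Its Dirichlet square `reciprocal * reciprocal` is
`τ(n) / n`. -/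
noncomputable def reciprocal : ArithmeticFunction ℝ := ⟨fun n => (n : ℝ)⁻¹, by simp⟩

theorem reciprocal_apply (n : ℕ) : reciprocal n = (n : ℝ)⁻¹ := rfl

theorem reciprocal_mul (m n : ℕ) : reciprocal (m * n) = reciprocal m * reciprocal n := by
  simp only [reciprocal_apply, Nat.cast_mul, mul_inv]

theorem isMultiplicative_reciprocal_mul_reciprocal :
    (reciprocal * reciprocal).IsMultiplicative :=
  have h : reciprocal.IsMultiplicative := ⟨by simp [reciprocal_apply], fun _ => reciprocal_mul _ _⟩
  h.mul h

theorem reciprocal_mul_reciprocal_apply (n : ℕ) :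
    (reciprocal * reciprocal) n = n.divisors.card * (n : ℝ)⁻¹ := by
  have hterm : ∀ x ∈ n.divisorsAntidiagonal, reciprocal x.1 * reciprocal x.2 = (n : ℝ)⁻¹ :=
    fun x hx => by
      rw [← reciprocal_mul, (Nat.mem_divisorsAntidiagonal.1 hx).1, reciprocal_apply]
  rw [ArithmeticFunction.mul_apply, sum_congr rfl hterm, sum_const, nsmul_eq_mul,
    ← Nat.map_div_right_divisors, card_map]

theorem reciprocal_mul_reciprocal_nonneg (n : ℕ) : 0 ≤ (reciprocal * reciprocal) n := by
  rw [reciprocal_mul_reciprocal_apply]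
  positivity

theorem sum_inv_sq_le_two (N : ℕ) : ∑ n ∈ Ioc 0 N, ((n : ℝ) ^ 2)⁻¹ ≤ 2 := by
  have h := sum_Ioo_inv_sq_le (α := ℝ) 0 (N + 1)
  rwa [Ioo_add_one_right_eq_Ioc, Nat.cast_zero, zero_add, div_one] at h

theorem sum_inv_le_two_mul_sum_squarefree_inv (N : ℕ) :
    ∑ n ∈ Ioc 0 N, (n : ℝ)⁻¹ ≤ 2 * ∑ a ∈ Ioc 0 N with Squarefree a, (a : ℝ)⁻¹ := by
  choose a b hab ha using Nat.sq_mul_squarefree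
  have hpos : ∀ n ∈ Ioc 0 N, 0 < b n ∧ 0 < a n := fun n hn => by
    rw [mem_Ioc, ← hab n] at hn
    exact ⟨Nat.pos_of_ne_zero fun h => by simp [h] at hn, Nat.pos_of_mul_pos_left hn.1⟩
  calc ∑ n ∈ Ioc 0 N, (n : ℝ)⁻¹
      ≤ ∑ x ∈ Ioc 0 N ×ˢ {a ∈ Ioc 0 N | Squarefree a}, ((x.1 : ℝ) ^ 2)⁻¹ * (x.2 : ℝ)⁻¹ := by
        refine sum_le_sum_of_injOn (fun n => (b n, a n)) (fun n hn => ?_) (fun n _ n' _ h => ?_)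
          (fun n _ => ?_) fun _ _ => by positivity
        · have hbn : b n ∣ n := ⟨b n * a n, by rw [← mul_assoc, ← sq, hab]⟩
          have han : a n ∣ n := ⟨b n ^ 2, by rw [mul_comm, hab]⟩
          have hle := mem_Ioc.1 hn
          simp only [coe_product, Set.mem_prod, mem_coe, mem_filter, mem_Ioc]
          exact ⟨⟨(hpos n hn).1, (Nat.le_of_dvd hle.1 hbn).trans hle.2⟩,
            ⟨(hpos n hn).2, (Nat.le_of_dvd hle.1 han).trans hle.2⟩, ha n⟩
        · rw [Prod.mk.injEq] at h
          rw [← hab n, ← hab n', h.1, h.2]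
        · rw [← mul_inv]
          exact_mod_cast (congrArg (fun k : ℕ => (k : ℝ)⁻¹) (hab n)).ge
    _ = (∑ n ∈ Ioc 0 N, ((n : ℝ) ^ 2)⁻¹) * ∑ a ∈ Ioc 0 N with Squarefree a, (a : ℝ)⁻¹ := by
        rw [sum_mul_sum, sum_product]
    _ ≤ 2 * ∑ a ∈ Ioc 0 N with Squarefree a, (a : ℝ)⁻¹ :=
        mul_le_mul_of_nonneg_right (sum_inv_sq_le_two N) (sum_nonneg fun _ _ => by positivity)

theorem div_mem_filter_squarefree {N a g : ℕ} (ha : a ∈ {a ∈ Ioc 0 N | Squarefree a})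
    (hg : g ∣ a) : a / g ∈ {a ∈ Ioc 0 N | Squarefree a} := by
  rw [mem_filter, mem_Ioc] at ha ⊢
  have hdvd := Nat.div_dvd_of_dvd hg
  exact ⟨⟨Nat.pos_of_dvd_of_pos hdvd ha.1.1, (Nat.div_le_self a g).trans ha.1.2⟩,
    ha.2.squarefree_of_dvd hdvd⟩

/-- Dividing both entries of a pair of squarefree numbers by their gcd `g` makes it coprime, at
the cost of a factor `g⁻²`. -/
theorem sq_sum_squarefree_inv_le_two_mul_sum_coprime (N : ℕ) :
    (∑ a ∈ Ioc 0 N with Squarefree a, (a : ℝ)⁻¹) ^ 2 ≤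
      2 * ∑ x ∈ {a ∈ Ioc 0 N | Squarefree a} ×ˢ {b ∈ Ioc 0 N | Squarefree b} with
        x.1.Coprime x.2, (x.1 : ℝ)⁻¹ * (x.2 : ℝ)⁻¹ := by
  set S := {a ∈ Ioc 0 N | Squarefree a}
  have hleft (a b : ℕ) : a.gcd b * (a / a.gcd b) = a := Nat.mul_div_cancel' (Nat.gcd_dvd_left a b)
  have hright (a b : ℕ) : a.gcd b * (b / a.gcd b) = b :=
    Nat.mul_div_cancel' (Nat.gcd_dvd_right a b)
  calc (∑ a ∈ S, (a : ℝ)⁻¹) ^ 2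
      = ∑ x ∈ S ×ˢ S, (x.1 : ℝ)⁻¹ * (x.2 : ℝ)⁻¹ := by rw [sq, sum_mul_sum, sum_product]
    _ ≤ ∑ z ∈ Ioc 0 N ×ˢ {x ∈ S ×ˢ S | x.1.Coprime x.2},
          ((z.1 : ℝ) ^ 2)⁻¹ * ((z.2.1 : ℝ)⁻¹ * (z.2.2 : ℝ)⁻¹) := by
        refine sum_le_sum_of_injOn
          (fun x : ℕ × ℕ => (x.1.gcd x.2, x.1 / x.1.gcd x.2, x.2 / x.1.gcd x.2)) ?_ ?_ ?_
          fun _ _ => by positivity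
        · rintro ⟨a, b⟩ hx
          rw [mem_coe, mem_product] at hx
          obtain ⟨ha0, haN⟩ := mem_Ioc.1 (mem_filter.1 hx.1).1
          have hg : 0 < a.gcd b := Nat.gcd_pos_of_pos_left b ha0
          rw [mem_coe, mem_product, mem_filter, mem_product, mem_Ioc]
          exact ⟨⟨hg, (Nat.gcd_le_left b ha0).trans haN⟩,
            ⟨div_mem_filter_squarefree hx.1 (Nat.gcd_dvd_left a b),
              div_mem_filter_squarefree hx.2 (Nat.gcd_dvd_right a b)⟩,
            Nat.coprime_div_gcd_div_gcd hg⟩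
        · rintro ⟨a, b⟩ _ ⟨a', b'⟩ _ h
          simp only [Prod.mk.injEq] at h ⊢
          obtain ⟨hgcd, hfst, hsnd⟩ := h
          exact ⟨by rw [← hleft a b, hfst, hgcd, hleft], by rw [← hright a b, hsnd, hgcd, hright]⟩
        · rintro ⟨a, b⟩ _
          have hmul : a * b = a.gcd b ^ 2 * (a / a.gcd b * (b / a.gcd b)) := by
            rw [sq, mul_mul_mul_comm, hleft, hright]
          rw [← mul_inv, ← mul_inv, ← mul_inv]
          exact_mod_cast (congrArg (fun k : ℕ => (k : ℝ)⁻¹) hmul).le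
    _ = (∑ g ∈ Ioc 0 N, ((g : ℝ) ^ 2)⁻¹) *
          ∑ x ∈ S ×ˢ S with x.1.Coprime x.2, (x.1 : ℝ)⁻¹ * (x.2 : ℝ)⁻¹ := by
        rw [sum_mul_sum, sum_product]
    _ ≤ 2 * ∑ x ∈ S ×ˢ S with x.1.Coprime x.2, (x.1 : ℝ)⁻¹ * (x.2 : ℝ)⁻¹ :=
        mul_le_mul_of_nonneg_right (sum_inv_sq_le_two N) (sum_nonneg fun _ _ => by positivity)

theorem sum_coprime_squarefree_inv_le (N : ℕ) :
    ∑ x ∈ {a ∈ Ioc 0 N | Squarefree a} ×ˢ {b ∈ Ioc 0 N | Squarefree b} with x.1.Coprime x.2,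
        (x.1 : ℝ)⁻¹ * (x.2 : ℝ)⁻¹ ≤
      ∑ l ∈ Ioc 0 (N ^ 2) with Squarefree l, (reciprocal * reciprocal) l := by
  rw [← sum_fiberwise_of_maps_to (g := fun x : ℕ × ℕ => x.1 * x.2)
    (t := {l ∈ Ioc 0 (N ^ 2) | Squarefree l})]
  · refine sum_le_sum fun l hl => ?_
    have hl0 : l ≠ 0 := (mem_filter.1 hl).2.ne_zero
    simp only [ArithmeticFunction.mul_apply, reciprocal_apply]
    refine sum_le_sum_of_subset_of_nonneg (fun x hx => ?_) fun _ _ _ => by positivity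
    exact Nat.mem_divisorsAntidiagonal.2 ⟨(mem_filter.1 hx).2, hl0⟩
  · rintro ⟨a, b⟩ hx
    simp only [mem_filter, mem_product, mem_Ioc] at hx ⊢
    obtain ⟨⟨⟨⟨ha0, haN⟩, ha⟩, ⟨hb0, hbN⟩, hb⟩, hab⟩ := hx
    exact ⟨⟨mul_pos ha0 hb0, sq N ▸ mul_le_mul' haN hbN⟩, (Nat.squarefree_mul hab).2 ⟨ha, hb⟩⟩

theorem sq_log_le_sum_squarefree_reciprocal_mul_reciprocal (N : ℕ) :
    Real.log N ^ 2 ≤ 8 * ∑ l ∈ Ioc 0 (N ^ 2) with Squarefree l, (reciprocal * reciprocal) l := by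
  rcases N.eq_zero_or_pos with rfl | hN
  · simp
  have hharmonic : Real.log N ≤ ∑ n ∈ Ioc 0 N, (n : ℝ)⁻¹ := by
    have hlog : Real.log N ≤ Real.log ↑(N + 1) :=
      Real.log_le_log (by exact_mod_cast hN) (by exact_mod_cast N.le_succ)
    have h := hlog.trans (log_add_one_le_harmonic N)
    rw [harmonic_eq_sum_Icc, show Icc 1 N = Ioc 0 N from Icc_add_one_left_eq_Ioc 0 N] at h
    push_cast at h
    exact h
  have hsquarefree := hharmonic.trans (sum_inv_le_two_mul_sum_squarefree_inv N)
  calc Real.log N ^ 2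
      ≤ (2 * ∑ a ∈ Ioc 0 N with Squarefree a, (a : ℝ)⁻¹) ^ 2 :=
        pow_le_pow_left₀ (Real.log_natCast_nonneg N) hsquarefree 2
    _ = 4 * (∑ a ∈ Ioc 0 N with Squarefree a, (a : ℝ)⁻¹) ^ 2 := by ring
    _ ≤ 4 * (2 * ∑ l ∈ Ioc 0 (N ^ 2) with Squarefree l, (reciprocal * reciprocal) l) := by
        gcongr
        exact (sq_sum_squarefree_inv_le_two_mul_sum_coprime N).trans
          (mul_le_mul_of_nonneg_left (sum_coprime_squarefree_inv_le N) zero_le_two)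
    _ = 8 * ∑ l ∈ Ioc 0 (N ^ 2) with Squarefree l, (reciprocal * reciprocal) l := by ring

/-- Write each squarefree `l` as `gcd(l, m)` times a number coprime to `m`. -/
theorem sum_squarefree_le_mul_sum_coprime {f : ArithmeticFunction ℝ} (hf : f.IsMultiplicative)
    (hf0 : ∀ n, 0 ≤ f n) (R : ℕ) {m : ℕ} (hm : m ≠ 0) :
    ∑ l ∈ Ioc 0 R with Squarefree l, f l ≤
      (f * ζ) m * ∑ l ∈ Ioc 0 R with Squarefree l ∧ l.Coprime m, f l := by
  have hsplit (l : ℕ) : l.gcd m * (l / l.gcd m) = l := Nat.mul_div_cancel' (Nat.gcd_dvd_left l m)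
  have hcop {l : ℕ} (hl : Squarefree l) : (l.gcd m).Coprime (l / l.gcd m) :=
    Nat.coprime_of_squarefree_mul ((hsplit l).symm ▸ hl)
  rw [coe_mul_zeta_apply, sum_mul_sum, ← sum_product']
  refine sum_le_sum_of_injOn (fun l => (l.gcd m, l / l.gcd m)) (fun l hl => ?_)
    (fun l _ l' _ h => ?_) (fun l hl => ?_) fun x _ => mul_nonneg (hf0 x.1) (hf0 x.2)
  · simp only [coe_filter, Set.mem_ofPred_eq, mem_Ioc] at hl
    obtain ⟨⟨hl0, hlR⟩, hl⟩ := hl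
    have hdvd : l / l.gcd m ∣ l := Nat.div_dvd_of_dvd (Nat.gcd_dvd_left l m)
    simp only [coe_product, Set.mem_prod, mem_coe, mem_filter, mem_Ioc, Nat.mem_divisors]
    refine ⟨⟨Nat.gcd_dvd_right l m, hm⟩, ⟨Nat.pos_of_dvd_of_pos hdvd hl0,
      (Nat.div_le_self _ _).trans hlR⟩, hl.squarefree_of_dvd hdvd, ?_⟩
    exact Nat.eq_one_of_dvd_coprimes (hcop hl)
      (Nat.dvd_gcd ((Nat.gcd_dvd_left _ _).trans hdvd) (Nat.gcd_dvd_right _ _))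
      (Nat.gcd_dvd_left _ _)
  · rw [Prod.mk.injEq] at h
    rw [← hsplit l, ← hsplit l', h.2, h.1]
  · rw [← hf.map_mul_of_coprime (hcop (mem_filter.1 hl).2), hsplit]

theorem reciprocal_mul_reciprocal_mul_zeta_nonneg (n : ℕ) :
    0 ≤ (reciprocal * reciprocal * ζ : ArithmeticFunction ℝ) n := by
  rw [coe_mul_zeta_apply]
  exact sum_nonneg fun _ _ => reciprocal_mul_reciprocal_nonneg _

theorem sum_reciprocal_mul_reciprocal_mul_zeta_le (N : ℕ) :
    ∑ n ∈ Ioc 0 N, (reciprocal * reciprocal * ζ : ArithmeticFunction ℝ) n ≤ 4 * N := by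
  have hsq : ∑ n ∈ Ioc 0 N, (reciprocal * reciprocal) n * (n : ℝ)⁻¹ ≤ 2 * 2 :=
    calc ∑ n ∈ Ioc 0 N, (reciprocal * reciprocal) n * (n : ℝ)⁻¹
        = ∑ n ∈ Ioc 0 N, (reciprocal.pmul reciprocal * reciprocal.pmul reciprocal) n := by
          refine sum_congr rfl fun n _ => ?_
          rw [ArithmeticFunction.mul_apply, ArithmeticFunction.mul_apply, sum_mul]
          refine sum_congr rfl fun x hx => ?_
          rw [← reciprocal_apply n, ← (Nat.mem_divisorsAntidiagonal.1 hx).1, reciprocal_mul,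
            mul_mul_mul_comm, pmul_apply, pmul_apply]
      _ = ∑ x ∈ Ioc 0 N ×ˢ Ioc 0 N with x.1 * x.2 ≤ N, ((x.1 : ℝ) ^ 2)⁻¹ * ((x.2 : ℝ) ^ 2)⁻¹ := by
          simp only [sum_Ioc_mul_eq_sum_prod_filter, pmul_apply, reciprocal_apply, sq, mul_inv]
      _ ≤ ∑ x ∈ Ioc 0 N ×ˢ Ioc 0 N, ((x.1 : ℝ) ^ 2)⁻¹ * ((x.2 : ℝ) ^ 2)⁻¹ :=
          sum_le_sum_of_subset_of_nonneg (filter_subset _ _) fun _ _ _ => by positivity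
      _ = (∑ n ∈ Ioc 0 N, ((n : ℝ) ^ 2)⁻¹) * ∑ n ∈ Ioc 0 N, ((n : ℝ) ^ 2)⁻¹ := by
          rw [sum_mul_sum, sum_product]
      _ ≤ 2 * 2 := mul_le_mul (sum_inv_sq_le_two N) (sum_inv_sq_le_two N)
          (sum_nonneg fun _ _ => by positivity) zero_le_two
  calc ∑ n ∈ Ioc 0 N, (reciprocal * reciprocal * ζ : ArithmeticFunction ℝ) n
      = ∑ n ∈ Ioc 0 N, (reciprocal * reciprocal) n * ↑(N / n) := sum_Ioc_mul_zeta_eq_sum _ N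
    _ ≤ ∑ n ∈ Ioc 0 N, (reciprocal * reciprocal) n * (N / n) := by
        gcongr with n
        · exact reciprocal_mul_reciprocal_nonneg n
        · exact Nat.cast_div_le
    _ = (∑ n ∈ Ioc 0 N, (reciprocal * reciprocal) n * (n : ℝ)⁻¹) * N := by
        rw [sum_mul]
        exact sum_congr rfl fun n _ => by rw [div_eq_mul_inv, mul_comm (N : ℝ), mul_assoc]
    _ ≤ 4 * N := mul_le_mul_of_nonneg_right (hsq.trans_eq (by norm_num)) N.cast_nonneg

theorem sum_reciprocal_mul_reciprocal_mul_zeta_two_mul_le (H : ℕ) :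
    ∑ k ∈ Ioc 0 H, (reciprocal * reciprocal * ζ : ArithmeticFunction ℝ) (2 * k) ≤ 8 * H :=
  calc ∑ k ∈ Ioc 0 H, (reciprocal * reciprocal * ζ : ArithmeticFunction ℝ) (2 * k)
      ≤ ∑ n ∈ Ioc 0 (2 * H), (reciprocal * reciprocal * ζ : ArithmeticFunction ℝ) n := by
        refine sum_le_sum_of_injOn (2 * ·) (fun k hk => ?_)
          (fun k _ k' _ h => Nat.eq_of_mul_eq_mul_left two_pos h) (fun _ _ => le_rfl)
          fun n _ => reciprocal_mul_reciprocal_mul_zeta_nonneg n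
        rw [mem_coe, mem_Ioc] at hk ⊢
        exact ⟨Nat.mul_pos two_pos hk.1, Nat.mul_le_mul_left 2 hk.2⟩
    _ ≤ 4 * ↑(2 * H) := sum_reciprocal_mul_reciprocal_mul_zeta_le _
    _ = 8 * H := by push_cast; ring

end ReciprocalSums

section PairSieve

theorem abs_card_filter_modEq_sub_le_one (N v : ℕ) {r : ℕ} (hr : 0 < r) :
    |(#{n ∈ Ioc 0 N | n ≡ v [MOD r]} : ℝ) - N / r| ≤ 1 := by
  have hcard := Nat.Ioc_filter_modEq_card 0 N hr v
  have hmono : ⌊((0 : ℕ) - v : ℚ) / r⌋ ≤ ⌊((N : ℕ) - v : ℚ) / r⌋ := by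
    gcongr
    exact N.zero_le
  rw [max_eq_left (sub_nonneg.2 hmono)] at hcard
  have hcast : (#{n ∈ Ioc 0 N | n ≡ v [MOD r]} : ℚ) =
      ⌊((N : ℕ) - v : ℚ) / r⌋ - ⌊((0 : ℕ) - v : ℚ) / r⌋ := by exact_mod_cast hcard
  have hsub : (N : ℚ) / r = ((N : ℕ) - v : ℚ) / r - ((0 : ℕ) - v : ℚ) / r := by
    push_cast
    ring
  have habs : |(#{n ∈ Ioc 0 N | n ≡ v [MOD r]} : ℚ) - N / r| ≤ 1 := by
    rw [hcast, hsub, abs_le]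
    constructor <;> linarith [Int.floor_le (((N : ℕ) - v : ℚ) / r),
      Int.lt_floor_add_one (((N : ℕ) - v : ℚ) / r), Int.floor_le (((0 : ℕ) - v : ℚ) / r),
      Int.lt_floor_add_one (((0 : ℕ) - v : ℚ) / r)]
  have habs' := (Rat.cast_le (K := ℝ)).2 habs
  push_cast at habs'
  exact habs'

theorem abs_card_filter_dvd_and_dvd_add_sub_le_one (N k : ℕ) {a b : ℕ} (ha : 0 < a) (hb : 0 < b)
    (hab : a.Coprime b) :
    |(#{n ∈ Ioc 0 N | a ∣ n ∧ b ∣ n + k} : ℝ) - N / (a * b : ℕ)| ≤ 1 := by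
  obtain ⟨v, hva, hvb⟩ := Nat.chineseRemainder hab 0 (k * (b - 1))
  have hvk : v + k ≡ 0 [MOD b] := (hvb.add_right k).trans <| Nat.modEq_zero_iff_dvd.2
    ⟨k, by rw [Nat.mul_sub_one, Nat.sub_add_cancel (Nat.le_mul_of_pos_right k hb), mul_comm]⟩
  have hclass (n : ℕ) : a ∣ n ∧ b ∣ n + k ↔ n ≡ v [MOD a * b] := by
    rw [← Nat.modEq_and_modEq_iff_modEq_mul hab, ← Nat.modEq_zero_iff_dvd,
      ← Nat.modEq_zero_iff_dvd]
    exact and_congr ⟨fun h => h.trans hva.symm, fun h => h.trans hva⟩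
      ⟨fun h => Nat.ModEq.add_right_cancel' k (h.trans hvk.symm),
        fun h => (h.add_right k).trans hvk⟩
  simp only [hclass]
  exact abs_card_filter_modEq_sub_le_one N v (Nat.mul_pos ha hb)

theorem mul_dvd_mul_add_and_gcd_eq_iff {a b k n : ℕ} (ha : 0 < a) (hk : b.Coprime k) :
    a * b ∣ n * (n + k) ∧ (a * b).gcd n = a ↔ a ∣ n ∧ b ∣ n + k := by
  constructor
  · rintro ⟨hdvd, hgcd⟩
    obtain ⟨m, rfl⟩ : a ∣ n := hgcd ▸ Nat.gcd_dvd_right (a * b) n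
    rw [Nat.gcd_mul_left] at hgcd
    have hbm : b.Coprime m := (Nat.mul_eq_left ha.ne').1 hgcd
    rw [mul_assoc] at hdvd
    exact ⟨dvd_mul_right a m,
      hbm.dvd_of_dvd_mul_left (Nat.dvd_of_mul_dvd_mul_left ha hdvd)⟩
  · rintro ⟨⟨m, rfl⟩, hb⟩
    have hbm : b.Coprime m := Nat.eq_one_of_dvd_coprimes hk (Nat.gcd_dvd_left b m) <|
      (Nat.dvd_add_right ((Nat.gcd_dvd_right b m).mul_left a)).1 ((Nat.gcd_dvd_left b m).trans hb)
    rw [Nat.gcd_mul_left, hbm.gcd_eq_one, mul_one, mul_assoc]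
    exact ⟨mul_dvd_mul_left a (hb.mul_left m), rfl⟩

theorem card_filter_dvd_mul_add (N : ℕ) {d k : ℕ} (hd : d ≠ 0) (hk : d.Coprime k) :
    #{n ∈ Ioc 0 N | d ∣ n * (n + k)} =
      ∑ x ∈ d.divisorsAntidiagonal, #{n ∈ Ioc 0 N | x.1 ∣ n ∧ x.2 ∣ n + k} := by
  rw [card_eq_sum_card_fiberwise (f := fun n => (d.gcd n, d / d.gcd n))
    (t := d.divisorsAntidiagonal)]
  · refine sum_congr rfl fun x hx => ?_
    obtain ⟨rfl, -⟩ := Nat.mem_divisorsAntidiagonal.1 hx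
    have hpos : 0 < x.1 := Nat.pos_of_ne_zero (left_ne_zero_of_mul hd)
    simp only [filter_filter,
      ← mul_dvd_mul_add_and_gcd_eq_iff hpos (hk.coprime_dvd_left (dvd_mul_left x.2 x.1))]
    refine congrArg card (filter_congr fun n _ => and_congr_right fun _ => ?_)
    rw [Prod.ext_iff]
    exact and_iff_left_of_imp fun h : (x.1 * x.2).gcd n = x.1 => by
      simp only [h, Nat.mul_div_cancel_left _ hpos]
  · exact fun n _ => Nat.mem_divisorsAntidiagonal.2
      ⟨Nat.mul_div_cancel' (Nat.gcd_dvd_left d n), hd⟩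

theorem abs_card_filter_dvd_mul_add_sub_le (N : ℕ) {d k : ℕ} (hd : Squarefree d)
    (hk : d.Coprime k) :
    |(#{n ∈ Ioc 0 N | d ∣ n * (n + k)} : ℝ) - (reciprocal * reciprocal) d * N| ≤
      d.divisors.card := by
  have hcard : d.divisorsAntidiagonal.card = d.divisors.card := by
    rw [← Nat.map_div_right_divisors, card_map]
  have hclass : ∀ x ∈ d.divisorsAntidiagonal,
      |(#{n ∈ Ioc 0 N | x.1 ∣ n ∧ x.2 ∣ n + k} : ℝ) - N / d| ≤ 1 := fun x hx => by
    obtain ⟨rfl, hne⟩ := Nat.mem_divisorsAntidiagonal.1 hx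
    exact abs_card_filter_dvd_and_dvd_add_sub_le_one N k
      (Nat.pos_of_ne_zero (left_ne_zero_of_mul hne))
      (Nat.pos_of_ne_zero (right_ne_zero_of_mul hne)) (Nat.coprime_of_squarefree_mul hd)
  calc |(#{n ∈ Ioc 0 N | d ∣ n * (n + k)} : ℝ) - (reciprocal * reciprocal) d * N|
      = |∑ x ∈ d.divisorsAntidiagonal,
          ((#{n ∈ Ioc 0 N | x.1 ∣ n ∧ x.2 ∣ n + k} : ℝ) - N / d)| := by
        rw [card_filter_dvd_mul_add N hd.ne_zero hk, reciprocal_mul_reciprocal_apply,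
          sum_sub_distrib, sum_const, hcard, nsmul_eq_mul, Nat.cast_sum, div_eq_inv_mul, mul_assoc]
    _ ≤ d.divisorsAntidiagonal.card • (1 : ℝ) :=
        (abs_sum_le_sum_abs _ _).trans (sum_le_card_nsmul _ _ _ hclass)
    _ = d.divisors.card := by rw [hcard, nsmul_one]

/-- The product of the primes up to `R` that do not divide `m`. -/
def coprimePrimorial (R m : ℕ) : ℕ := ∏ p ∈ Ioc 0 R with p.Prime ∧ p.Coprime m, p

theorem squarefree_coprimePrimorial (R m : ℕ) : Squarefree (coprimePrimorial R m) := by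
  refine squarefree_prod_of_pairwise_isCoprime (fun p hp q hq hpq => ?_) fun p hp =>
    (mem_filter.1 hp).2.1.prime.squarefree
  exact Nat.coprime_iff_isRelPrime.1 <|
    (Nat.coprime_primes (mem_filter.1 hp).2.1 (mem_filter.1 hq).2.1).2 hpq

theorem coprimePrimorial_coprime (R m : ℕ) : (coprimePrimorial R m).Coprime m :=
  Nat.Coprime.prod_left fun _ hp => (mem_filter.1 hp).2.2

theorem dvd_coprimePrimorial {R m l : ℕ} (hl : Squarefree l) (hlR : l ≤ R) (hlm : l.Coprime m) :
    l ∣ coprimePrimorial R m := by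
  rw [← Nat.prod_primeFactors_of_squarefree hl]
  refine prod_dvd_prod_of_subset _ _ _ fun p hp => ?_
  obtain ⟨hp, hpl, hl0⟩ := Nat.mem_primeFactors.1 hp
  exact mem_filter.2 ⟨mem_Ioc.2 ⟨hp.pos, (Nat.le_of_dvd (Nat.pos_of_ne_zero hl0) hpl).trans hlR⟩,
    hp, hlm.coprime_dvd_left hpl⟩

theorem coprimePrimorial_coprime_of_lt {R m p : ℕ} (hp : p.Prime) (hRp : R < p) :
    (coprimePrimorial R m).Coprime p :=
  Nat.Coprime.prod_left fun q hq => by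
    simp only [mem_filter, mem_Ioc] at hq
    exact (Nat.coprime_primes hq.2.1 hp).2 (hq.1.2.trans_lt hRp).ne

/-- The sieve removing the `n ≤ N` for which `n * (n + k)` has a prime factor `p ≤ R` not dividing
`2 * k`. For such `p` the residue classes `0` and `-k` are distinct, whence the density
`2 / p = (reciprocal * reciprocal) p < 1`. -/
noncomputable def pairSieve (N R k : ℕ) : BoundingSieve where
  support := (Ioc 0 N).image fun n => n * (n + k)
  prodPrimes := coprimePrimorial R (2 * k)
  prodPrimes_squarefree := squarefree_coprimePrimorial R (2 * k)
  weights := fun _ => 1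
  weights_nonneg := fun _ => zero_le_one
  totalMass := N
  nu := reciprocal * reciprocal
  nu_mult := isMultiplicative_reciprocal_mul_reciprocal
  nu_pos_of_prime p hp _ := by
    have := hp.pos
    rw [reciprocal_mul_reciprocal_apply, hp.divisors, card_pair hp.one_lt.ne]
    positivity
  nu_lt_one_of_prime p hp hdvd := by
    have hp2 : p.Coprime 2 := ((coprimePrimorial_coprime R (2 * k)).coprime_dvd_left
      hdvd).coprime_mul_right_right
    have hlt : 2 < p := hp.two_le.lt_of_ne' fun h => by simp [h] at hp2
    have hlt' : (2 : ℝ) < p := by exact_mod_cast hlt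
    rw [reciprocal_mul_reciprocal_apply, hp.divisors, card_pair hp.one_lt.ne, ← div_eq_mul_inv,
      div_lt_one (two_pos.trans hlt')]
    exact hlt'

theorem sum_support_pairSieve (N R k : ℕ) (f : ℕ → ℝ) :
    ∑ m ∈ (pairSieve N R k).support, f m = ∑ n ∈ Ioc 0 N, f (n * (n + k)) :=
  have hmono : StrictMono fun n => n * (n + k) := fun _ _ h => Nat.mul_lt_mul'' h (by gcongr)
  sum_image hmono.injective.injOn

theorem abs_rem_pairSieve_le (N R : ℕ) {k d : ℕ} (hd : d ∣ coprimePrimorial R (2 * k)) :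
    |(pairSieve N R k).rem d| ≤ d.divisors.card := by
  have hk : d.Coprime k :=
    ((coprimePrimorial_coprime R (2 * k)).coprime_dvd_left hd).coprime_mul_left_right
  have hmult : (pairSieve N R k).multSum d = #{n ∈ Ioc 0 N | d ∣ n * (n + k)} :=
    (sum_support_pairSieve N R k _).trans (natCast_card_filter _ _).symm
  rw [rem, hmult]
  exact abs_card_filter_dvd_mul_add_sub_le N
    ((squarefree_coprimePrimorial R (2 * k)).squarefree_of_dvd hd) hk

theorem sum_abs_rem_pairSieve_le (N R k : ℕ) :
    ∑ d ∈ (pairSieve N R k).prodPrimes.divisors with d ≤ R,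
      ∑ e ∈ (pairSieve N R k).prodPrimes.divisors with e ≤ R,
        |(pairSieve N R k).rem (d.lcm e)| ≤ (R : ℝ) ^ 4 := by
  set D := {d ∈ (pairSieve N R k).prodPrimes.divisors | d ≤ R}
  have hD : (#D : ℝ) ≤ R := by
    have hsub : D ⊆ Ioc 0 R := fun d hd =>
      mem_Ioc.2 ⟨Nat.pos_of_mem_divisors (mem_filter.1 hd).1, (mem_filter.1 hd).2⟩
    exact_mod_cast (card_le_card hsub).trans_eq (Nat.card_Ioc 0 R)
  have hrem : ∀ d ∈ D, ∀ e ∈ D, |(pairSieve N R k).rem (d.lcm e)| ≤ (R : ℝ) ^ 2 :=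
    fun d hd e he => by
      simp only [D, mem_filter, Nat.mem_divisors] at hd he
      have hlcm : d.lcm e ≤ R ^ 2 :=
        calc d.lcm e ≤ d * e := Nat.div_le_self _ _
          _ ≤ R ^ 2 := sq R ▸ mul_le_mul' hd.2 he.2
      exact (abs_rem_pairSieve_le N R (Nat.lcm_dvd hd.1.1 he.1.1)).trans
        (by exact_mod_cast (Nat.card_divisors_le_self _).trans hlcm)
  calc ∑ d ∈ D, ∑ e ∈ D, |(pairSieve N R k).rem (d.lcm e)|
      ≤ #D • (#D • (R : ℝ) ^ 2) :=
        sum_le_card_nsmul _ _ _ fun d hd => sum_le_card_nsmul _ _ _ (hrem d hd)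
    _ = #D * (#D * (R : ℝ) ^ 2) := by simp only [nsmul_eq_mul]
    _ ≤ R * (R * (R : ℝ) ^ 2) := by gcongr
    _ = (R : ℝ) ^ 4 := by ring

theorem nu_le_selbergTerms {s : BoundingSieve} {l : ℕ} (hl : l ∣ s.prodPrimes) :
    s.nu l ≤ s.selbergTerms l := by
  rw [selbergTerms_apply]
  refine le_mul_of_one_le_right (nu_pos_of_dvd_prodPrimes hl).le (one_le_prod fun p hp => ?_)
  have hprime := Nat.prime_of_mem_primeFactors hp
  have hdvd := (Nat.dvd_of_mem_primeFactors hp).trans hl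
  exact (one_le_inv₀ (sub_pos.2 (s.nu_lt_one_of_prime p hprime hdvd))).2
    (sub_le_self 1 (s.nu_pos_of_prime p hprime hdvd).le)

theorem sum_coprime_le_selbergSum_pairSieve (N R k : ℕ) :
    ∑ l ∈ Ioc 0 R with Squarefree l ∧ l.Coprime (2 * k), (reciprocal * reciprocal) l ≤
      selbergSum (pairSieve N R k) R := by
  have hdvd : ∀ l ∈ {l ∈ Ioc 0 R | Squarefree l ∧ l.Coprime (2 * k)},
      l ∣ coprimePrimorial R (2 * k) ∧ l ≤ R := fun l hl => by
    simp only [mem_filter, mem_Ioc] at hl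
    exact ⟨dvd_coprimePrimorial hl.2.1 hl.1.2 hl.2.2, hl.1.2⟩
  refine sum_le_sum_of_injOn id (fun l hl => ?_) (Set.injOn_id _)
    (fun l hl => nu_le_selbergTerms (s := pairSieve N R k) (hdvd l hl).1)
    fun l hl => (selbergTerms_pos (Nat.dvd_of_mem_divisors (mem_filter.1 hl).1)).le
  exact mem_filter.2 ⟨Nat.mem_divisors.2 ⟨(hdvd l hl).1, prodPrimes_ne_zero⟩, (hdvd l hl).2⟩

theorem sq_log_le_mul_selbergSum_pairSieve (N y : ℕ) {k : ℕ} (hk : k ≠ 0) :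
    Real.log y ^ 2 ≤ 8 * ((reciprocal * reciprocal * ζ : ArithmeticFunction ℝ) (2 * k) *
      selbergSum (pairSieve N (y ^ 2) k) (y ^ 2)) :=
  (sq_log_le_sum_squarefree_reciprocal_mul_reciprocal y).trans <|
    mul_le_mul_of_nonneg_left ((sum_squarefree_le_mul_sum_coprime
      isMultiplicative_reciprocal_mul_reciprocal reciprocal_mul_reciprocal_nonneg (y ^ 2)
      (mul_ne_zero two_ne_zero hk)).trans <|
      mul_le_mul_of_nonneg_left (sum_coprime_le_selbergSum_pairSieve N (y ^ 2) k)
        (reciprocal_mul_reciprocal_mul_zeta_nonneg _)) (by norm_num)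

/-- The primes `p ≤ N` for which `p + k` is prime as well. -/
def primePairs (N k : ℕ) : Finset ℕ := {p ∈ Ioc 0 N | p.Prime ∧ (p + k).Prime}

theorem card_primePairs_le_siftedSum_add (N R k : ℕ) :
    (#(primePairs N k) : ℝ) ≤ (pairSieve N R k).siftedSum + R := by
  have hsifted : (pairSieve N R k).siftedSum =
      #{n ∈ Ioc 0 N | (coprimePrimorial R (2 * k)).Coprime (n * (n + k))} :=
    (sum_support_pairSieve N R k _).trans (natCast_card_filter _ _).symm
  have hsub : primePairs N k ⊆
      {n ∈ Ioc 0 N | (coprimePrimorial R (2 * k)).Coprime (n * (n + k))} ∪ Ioc 0 R := fun p hp => by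
    simp only [primePairs, mem_filter, mem_union, mem_Ioc] at hp ⊢
    refine (le_or_gt p R).symm.imp (fun hRp => ⟨hp.1, ?_⟩) fun hpR => ⟨hp.1.1, hpR⟩
    exact (coprimePrimorial_coprime_of_lt hp.2.1 hRp).mul_right
      (coprimePrimorial_coprime_of_lt hp.2.2 (hRp.trans_le (Nat.le_add_right p k)))
  have hcard := (card_le_card hsub).trans (card_union_le _ _)
  rw [Nat.card_Ioc, Nat.sub_zero] at hcard
  rw [hsifted]
  exact_mod_cast hcard

theorem card_primePairs_le (N : ℕ) {y k : ℕ} (hy : 2 ≤ y) (hk : k ≠ 0) :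
    (#(primePairs N k) : ℝ) ≤
      8 * N / Real.log y ^ 2 * (reciprocal * reciprocal * ζ : ArithmeticFunction ℝ) (2 * k) +
        2 * (y : ℝ) ^ 8 := by
  have hy1 : (1 : ℝ) < y := by exact_mod_cast hy
  have hlog : 0 < Real.log y := Real.log_pos hy1
  have hR : 1 ≤ y ^ 2 := Nat.one_le_pow _ _ (two_pos.trans_le hy)
  set s := pairSieve N (y ^ 2) k
  have hmain : s.totalMass / selbergSum s (y ^ 2) ≤
      8 * N / Real.log y ^ 2 * (reciprocal * reciprocal * ζ : ArithmeticFunction ℝ) (2 * k) := by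
    change (N : ℝ) / _ ≤ _
    rw [div_mul_eq_mul_div, div_le_div_iff₀ (selbergSum_pos s hR) (pow_pos hlog 2)]
    linarith [mul_le_mul_of_nonneg_left (sq_log_le_mul_selbergSum_pairSieve N y hk)
      (Nat.cast_nonneg (α := ℝ) N)]
  have hy8 : ((y ^ 2 : ℕ) : ℝ) ^ 4 = (y : ℝ) ^ 8 := by push_cast; ring
  have hy2 : ((y ^ 2 : ℕ) : ℝ) ≤ (y : ℝ) ^ 8 := by
    rw [Nat.cast_pow]
    exact pow_le_pow_right₀ hy1.le (by norm_num)
  linarith [card_primePairs_le_siftedSum_add N (y ^ 2) k, sum_abs_rem_pairSieve_le N (y ^ 2) k,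
    siftedSum_le_div_selbergSum_add_sum_abs_rem s hR (Nat.cast_nonneg N)]

theorem sum_card_primePairs_le (N H : ℕ) {y : ℕ} (hy : 2 ≤ y) :
    ∑ k ∈ Ioc 0 H, (#(primePairs N k) : ℝ) ≤ (64 * N / Real.log y ^ 2 + 2 * (y : ℝ) ^ 8) * H :=
  calc ∑ k ∈ Ioc 0 H, (#(primePairs N k) : ℝ)
      ≤ ∑ k ∈ Ioc 0 H, (8 * N / Real.log y ^ 2 *
          (reciprocal * reciprocal * ζ : ArithmeticFunction ℝ) (2 * k) + 2 * (y : ℝ) ^ 8) :=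
        sum_le_sum fun k hk => card_primePairs_le N hy (mem_Ioc.1 hk).1.ne'
    _ = 8 * N / Real.log y ^ 2 *
          ∑ k ∈ Ioc 0 H, (reciprocal * reciprocal * ζ : ArithmeticFunction ℝ) (2 * k) +
          H * (2 * (y : ℝ) ^ 8) := by
        rw [sum_add_distrib, mul_sum, sum_const, Nat.card_Ioc, nsmul_eq_mul, Nat.sub_zero]
    _ ≤ 8 * N / Real.log y ^ 2 * (8 * H) + H * (2 * (y : ℝ) ^ 8) := by
        gcongr
        exact sum_reciprocal_mul_reciprocal_mul_zeta_two_mul_le H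
    _ = (64 * N / Real.log y ^ 2 + 2 * (y : ℝ) ^ 8) * H := by ring

end PairSieve

section SmallGaps

open Filter

theorem log_le_two_mul_mul_log_nthRoot {n N : ℕ} (hn : n ≠ 0) (hN : 2 ^ n ≤ N) :
    Real.log N ≤ 2 * n * Real.log (n.nthRoot N) := by
  set y := n.nthRoot N
  have hy : 2 ≤ y := (Nat.le_nthRoot_iff hn).2 hN
  have hle : N ≤ y ^ (2 * n) :=
    calc N ≤ (y + 1) ^ n := (Nat.lt_pow_nthRoot_add_one hn N).le
      _ ≤ (y ^ 2) ^ n := Nat.pow_le_pow_left (by nlinarith) n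
      _ = y ^ (2 * n) := (pow_mul y 2 n).symm
  calc Real.log N ≤ Real.log ((y : ℝ) ^ (2 * n)) :=
        Real.log_le_log (by exact_mod_cast (Nat.two_pow_pos n).trans_le hN) (by exact_mod_cast hle)
    _ = 2 * n * Real.log y := by rw [Real.log_pow, Nat.cast_mul, Nat.cast_two]

theorem eventually_sq_log_le_sqrt : ∀ᶠ x : ℝ in atTop, Real.log x ^ 2 ≤ √x := by
  filter_upwards [(isLittleO_log_rpow_rpow_atTop 2 one_half_pos).bound one_pos] with x hx
  rw [one_mul, ← Real.sqrt_eq_rpow, Real.norm_of_nonneg (Real.sqrt_nonneg x),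
    Real.rpow_two] at hx
  exact (le_abs_self _).trans hx

theorem eventually_sum_card_primePairs_le : ∀ᶠ N : ℕ in atTop, ∀ H : ℕ,
    ∑ k ∈ Ioc 0 H, (#(primePairs N k) : ℝ) ≤ 2 ^ 17 * (N / Real.log N ^ 2) * H := by
  filter_upwards [tendsto_natCast_atTop_atTop.eventually eventually_sq_log_le_sqrt,
    eventually_ge_atTop (2 ^ 16)] with N hsqrt hN H
  have hlog : 0 < Real.log N :=
    Real.log_pos (by exact_mod_cast (by norm_num : 1 < 2 ^ 16).trans_le hN)
  set y := Nat.nthRoot 16 N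
  have hy : 2 ≤ y := (Nat.le_nthRoot_iff (by norm_num)).2 hN
  have hlogy : Real.log N ≤ 32 * Real.log y :=
    (log_le_two_mul_mul_log_nthRoot (by norm_num) hN).trans_eq (by norm_num [y])
  have hmain : 64 * N / Real.log y ^ 2 ≤ 2 ^ 16 * (N / Real.log N ^ 2) :=
    calc 64 * N / Real.log y ^ 2 ≤ 64 * N / (Real.log N / 32) ^ 2 := by
          gcongr
          linarith
      _ = 2 ^ 16 * (N / Real.log N ^ 2) := by
          field_simp
          norm_num
  have herror : (y : ℝ) ^ 8 ≤ N / Real.log N ^ 2 :=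
    calc (y : ℝ) ^ 8 ≤ √N := by
          apply Real.le_sqrt_of_sq_le
          rw [← pow_mul]
          exact_mod_cast Nat.pow_nthRoot_le (n := 16) (.inl (by norm_num))
      _ ≤ N / Real.log N ^ 2 := by
          rw [le_div_iff₀ (pow_pos hlog 2)]
          exact (mul_le_mul_of_nonneg_left hsqrt (Real.sqrt_nonneg _)).trans_eq
            (Real.mul_self_sqrt N.cast_nonneg)
  refine (sum_card_primePairs_le N H hy).trans (mul_le_mul_of_nonneg_right ?_ H.cast_nonneg)
  linarith [show 0 ≤ N / Real.log N ^ 2 by positivity]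

theorem eventually_div_log_le_primeCounting :
    ∀ᶠ N : ℕ in atTop, N / Real.log N ≤ 4 * Nat.primeCounting N := by
  filter_upwards [tendsto_natCast_atTop_atTop.eventually
    (Real.isLittleO_log_id_atTop.bound (show (0 : ℝ) < 1 / 10 by norm_num)),
    eventually_ge_atTop 10] with N hlogN hN
  have hN : (10 : ℝ) ≤ N := by exact_mod_cast hN
  have hlog : 0 < Real.log N := Real.log_pos (by linarith)
  have hlog_le : Real.log N ≤ N / 10 := by
    rw [Real.norm_of_nonneg hlog.le, id, Real.norm_of_nonneg (by linarith)] at hlogN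
    linarith
  have hlog_succ : Real.log (N + 1) ≤ Real.log 2 + Real.log N := by
    rw [← Real.log_mul two_ne_zero (by linarith)]
    exact Real.log_le_log (by linarith) (by linarith)
  have hpi := Chebyshev.pi_ge N
  have hnum : (N : ℝ) / 4 ≤ N * Real.log 2 - Real.log (N + 1) := by
    nlinarith [Real.log_two_gt_d9, Real.log_two_lt_d9]
  have := (div_le_div_of_nonneg_right hnum hlog.le).trans hpi
  rw [div_right_comm] at this
  linarith

/-- The indices `n` of the primes `p_n ≤ x` (`p_0 = 2`) with `p_{n+1} - p_n ≤ t`. Since `n < p_n`,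
bounding `n` by `x` loses nothing. -/
noncomputable def smallGaps (x t : ℝ) : Finset ℕ :=
  {n ∈ range (⌊x⌋₊ + 1) | (nthPrime n : ℝ) ≤ x ∧ ((nthPrime (n + 1) : ℝ) - nthPrime n) ≤ t}

theorem card_smallGaps_le (x t : ℝ) :
    #(smallGaps x t) ≤ ∑ k ∈ Ioc 0 ⌊t⌋₊, #(primePairs ⌊x⌋₊ k) := by
  have hmono : StrictMono nthPrime := Nat.nth_strictMono Nat.infinite_setOfPred_prime
  have hprime : ∀ n, (nthPrime n).Prime := Nat.prime_nth_prime
  refine (card_le_card_of_injOn nthPrime (fun n hn => ?_) hmono.injective.injOn).trans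
    (card_biUnion_le (s := Ioc 0 ⌊t⌋₊) (t := primePairs ⌊x⌋₊))
  obtain ⟨-, hnx, hgap⟩ := mem_filter.1 hn
  have hlt : nthPrime n < nthPrime (n + 1) := hmono n.lt_succ_self
  rw [← Nat.cast_sub hlt.le] at hgap
  refine mem_biUnion.2 ⟨nthPrime (n + 1) - nthPrime n,
    mem_Ioc.2 ⟨Nat.sub_pos_of_lt hlt, Nat.le_floor hgap⟩,
    mem_filter.2 ⟨mem_Ioc.2 ⟨(hprime n).pos, Nat.le_floor hnx⟩, hprime n, ?_⟩⟩
  rw [Nat.add_sub_cancel' hlt.le]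
  exact hprime (n + 1)

theorem log_le_two_mul_log_floor {x : ℝ} (hx : 2 ≤ x) : Real.log x ≤ 2 * Real.log ⌊x⌋₊ := by
  have hfloor : (2 : ℝ) ≤ ⌊x⌋₊ := by exact_mod_cast Nat.le_floor (by exact_mod_cast hx)
  calc Real.log x ≤ Real.log ((⌊x⌋₊ : ℝ) ^ 2) :=
        Real.log_le_log (by linarith) (by nlinarith [Nat.lt_floor_add_one x])
    _ = 2 * Real.log ⌊x⌋₊ := by rw [Real.log_pow, Nat.cast_two]

theorem eventually_card_smallGaps_div_primePi_le : ∀ᶠ x : ℝ in atTop, ∀ t : ℝ,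
    (#(smallGaps x t) : ℝ) / primePi x ≤ 2 ^ 20 * |t / Real.log x| := by
  have hfloor := tendsto_nat_floor_atTop (α := ℝ)
  filter_upwards [hfloor.eventually eventually_sum_card_primePairs_le,
    hfloor.eventually eventually_div_log_le_primeCounting, eventually_ge_atTop 2]
    with x hpairs hpi hx t
  set N := ⌊x⌋₊
  have hlogx : 0 < Real.log x := Real.log_pos (by linarith)
  have hlog : Real.log x ≤ 2 * Real.log N := log_le_two_mul_log_floor hx
  have ht : (⌊t⌋₊ : ℝ) ≤ |t| :=
    (Nat.cast_le.2 (Nat.floor_le_floor (le_abs_self t))).trans (Nat.floor_le (abs_nonneg t))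
  have hdensity : N / Real.log N ^ 2 ≤ 8 * primePi x / Real.log x :=
    calc N / Real.log N ^ 2 = N / Real.log N / Real.log N := by rw [sq, div_div]
      _ ≤ 4 * primePi x / (Real.log x / 2) :=
          div_le_div₀ (by positivity) hpi (half_pos hlogx) (by linarith)
      _ = 8 * primePi x / Real.log x := by ring
  refine div_le_of_le_mul₀ (Nat.cast_nonneg _) (by positivity) ?_
  calc (#(smallGaps x t) : ℝ)
      ≤ ∑ k ∈ Ioc 0 ⌊t⌋₊, (#(primePairs N k) : ℝ) := by exact_mod_cast card_smallGaps_le x t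
    _ ≤ 2 ^ 17 * (N / Real.log N ^ 2) * ⌊t⌋₊ := hpairs _
    _ ≤ 2 ^ 17 * (8 * primePi x / Real.log x) * |t| := by gcongr
    _ = 2 ^ 20 * |t / Real.log x| * primePi x := by
        rw [abs_div, abs_of_pos hlogx]
        ring

end SmallGaps

end SmallPrimeGaps

/-- **Theorem 3 (GPY IV), second part.** If `h = h(x)` satisfies `h(x)/log x → 0` as `x → ∞`,
then `#{n : p_n ≤ x, p_{n+1} - p_n ≤ h(x)} = o(π(x))`. -/
theorem very_small_gaps_zero_density (h : ℝ → ℝ)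
    (hh : Filter.Tendsto (fun x => h x / Real.log x) Filter.atTop (nhds 0)) :
    Filter.Tendsto (fun x : ℝ =>
      (((Finset.range (⌊x⌋₊ + 1)).filter (fun n =>
          (nthPrime n : ℝ) ≤ x ∧ ((nthPrime (n+1) : ℝ) - nthPrime n) ≤ h x)).card : ℝ)
        / (primePi x : ℝ)) Filter.atTop (nhds 0) := by
  refine squeeze_zero' (Filter.Eventually.of_forall fun x => by positivity)
    (SmallPrimeGaps.eventually_card_smallGaps_div_primePi_le.mono fun x hx => hx (h x)) ?_
  simpa only [abs_zero, mul_zero] using hh.abs.const_mul (2 ^ 20)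
end
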